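/- There is an absolute constant c > 0 such that for every integer t ≥ 1, every graph G with no K_t minor, and every ball hypergraph 𝓗 of G, τ(𝓗) ≤ c·t²·√(log t)·ν(𝓗)·log(t·ν(𝓗)), where log is the natural logarithm. -/

import Mathlib

/-- The ball of radius `r` centered at `v` in the graph metric of `G`:
all vertices `u` with `d_G(v,u) ≤ r` (in particular, `u` must be reachable from `v`). -/
def SimpleGraph.gBall {V : Type*} (G : SimpleGraph V) (v : V) (r : ℕ) : Set V :=
  {u | G.Reachable v u ∧ G.dist v u ≤ r}

/-- A ball hypergraph of `G` is given by its edge set `E`: a collection of subsets of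
`V(G)`, each of which is a ball of `G`. -/
def IsBallHypergraph {V : Type*} (G : SimpleGraph V) (E : Set (Set V)) : Prop :=
  ∀ e ∈ E, ∃ v r, e = G.gBall v r

/-- `H` is a minor of `G`: there are pairwise disjoint connected nonempty branch sets
in `G`, one for each vertex of `H`, with an edge of `G` between the branch sets of any
two adjacent vertices of `H`. -/
def GraphMinor {W : Type*} {V : Type*} (H : SimpleGraph W) (G : SimpleGraph V) : Prop :=
  ∃ f : W → Set V,
    (∀ w, (G.induce (f w)).Connected) ∧
    (Pairwise fun w₁ w₂ => Disjoint (f w₁) (f w₂)) ∧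
    (∀ w₁ w₂, H.Adj w₁ w₂ → ∃ u ∈ f w₁, ∃ v ∈ f w₂, G.Adj u v)

/-- The matching number of the hypergraph with edge set `E`: the maximum number of
pairwise disjoint edges. -/
noncomputable def matchingNumber {V : Type*} [Fintype V] (E : Set (Set V)) : ℕ :=
  sSup {n | ∃ M : Finset (Set V), ↑M ⊆ E ∧ (M : Set (Set V)).Pairwise Disjoint ∧ M.card = n}

/-- The transversal number of the hypergraph with edge set `E`: the minimum size of a
set of vertices meeting every edge. -/
noncomputable def transversalNumber {V : Type*} [Fintype V] (E : Set (Set V)) : ℕ :=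
  sInf {n | ∃ T : Finset V, (∀ e ∈ E, ∃ v ∈ T, v ∈ e) ∧ T.card = n}

namespace SimpleGraph

/-- A set is connected as soon as one of its vertices reaches all others by steps inside the set. -/
theorem induce_connected_of_reflTransGen {V : Type*} {G : SimpleGraph V} {s : Set V} {u : V}
    (hu : u ∈ s)
    (h : ∀ v ∈ s, Relation.ReflTransGen (fun a b => G.Adj a b ∧ a ∈ s ∧ b ∈ s) u v) :
    (G.induce s).Connected := by
  refine G.induce_connected_of_patches u hu fun {v} hv => ⟨s, subset_rfl, hu, hv, ?_⟩
  have key : ∀ w, Relation.ReflTransGen (fun a b => G.Adj a b ∧ a ∈ s ∧ b ∈ s) u w →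
      ∃ hw : w ∈ s, (G.induce s).Reachable ⟨u, hu⟩ ⟨w, hw⟩ := by
    intro w hw
    induction hw with
    | refl => exact ⟨hu, .refl _⟩
    | tail _ hbc ih =>
      obtain ⟨hb, ih⟩ := ih
      exact ⟨hbc.2.2, ih.trans (Adj.reachable (by simpa using hbc.1))⟩
  exact (key v (h v hv)).2

theorem reflTransGen_of_induce_connected {V : Type*} {G : SimpleGraph V} {s : Set V}
    (h : (G.induce s).Connected) {u v : V} (hu : u ∈ s) (hv : v ∈ s) :
    Relation.ReflTransGen (fun a b => G.Adj a b ∧ a ∈ s ∧ b ∈ s) u v := by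
  have h1 := h.preconnected ⟨u, hu⟩ ⟨v, hv⟩
  rw [reachable_iff_reflTransGen] at h1
  exact h1.lift Subtype.val fun a b hab => ⟨hab, a.2, b.2⟩

end SimpleGraph

theorem GraphMinor.mono {W V : Type*} {H : SimpleGraph W} {G G' : SimpleGraph V} (hG : G ≤ G')
    (h : GraphMinor H G) : GraphMinor H G' := by
  obtain ⟨f, hf, hd, ha⟩ := h
  refine ⟨f, fun w => (hf w).mono fun a b hab => hG hab, hd, fun a b hab => ?_⟩
  obtain ⟨u, hu, v, hv, huv⟩ := ha a b hab
  exact ⟨u, hu, v, hv, hG huv⟩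

theorem GraphMinor.trans {W U V : Type*} {H : SimpleGraph W} {K : SimpleGraph U}
    {G : SimpleGraph V} (h₁ : GraphMinor H K) (h₂ : GraphMinor K G) : GraphMinor H G := by
  obtain ⟨f, hf, hfd, hfa⟩ := h₁
  obtain ⟨g, hg, hgd, hga⟩ := h₂
  refine ⟨fun w => ⋃ x ∈ f w, g x, fun w => ?_, fun a b hab => ?_, fun a b hab => ?_⟩
  · have mono : ∀ x ∈ f w, ∀ u ∈ g x, ∀ v ∈ g x, Relation.ReflTransGen
        (fun a b => G.Adj a b ∧ a ∈ (⋃ x ∈ f w, g x) ∧ b ∈ (⋃ x ∈ f w, g x)) u v := by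
      intro x hx u hu v hv
      refine (SimpleGraph.reflTransGen_of_induce_connected (hg x) hu hv).lift id fun a b hab => ?_
      exact ⟨hab.1, Set.mem_biUnion hx hab.2.1, Set.mem_biUnion hx hab.2.2⟩
    obtain ⟨⟨x₀, hx₀⟩⟩ := (hf w).nonempty
    obtain ⟨⟨u₀, hu₀⟩⟩ := (hg x₀).nonempty
    refine SimpleGraph.induce_connected_of_reflTransGen (u := u₀) (Set.mem_biUnion hx₀ hu₀) ?_
    intro v hv
    simp only [Set.mem_iUnion] at hv
    obtain ⟨x, hx, hv⟩ := hv
    have hpath := SimpleGraph.reflTransGen_of_induce_connected (hf w) hx₀ hx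
    induction hpath generalizing v with
    | refl => exact mono x₀ hx₀ u₀ hu₀ v hv
    | @tail y z _ hyz ih =>
      obtain ⟨a, ha, b, hb, hab⟩ := hga y z hyz.1
      refine (ih a hyz.2.1 ha).trans (Relation.ReflTransGen.head ?_ (mono z hx b hb v hv))
      exact ⟨hab, Set.mem_biUnion hyz.2.1 ha, Set.mem_biUnion hyz.2.2 hb⟩
  · simp only [Set.disjoint_iUnion_left, Set.disjoint_iUnion_right]
    intro x hx y hy
    refine hgd fun hxy => ?_
    subst hxy
    exact Set.disjoint_left.1 (hfd hab) (by assumption) (by assumption)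
  · obtain ⟨x, hx, y, hy, hxy⟩ := hfa a b hab
    obtain ⟨u, hu, v, hv, huv⟩ := hga x y hxy
    exact ⟨u, Set.mem_biUnion hx hu, v, Set.mem_biUnion hy hv, huv⟩

/-- Integer-valued potentials that are `1`-Lipschitz and can be descended to their minimizers `p i`
split the graph into Voronoi-like cells, which are the branch sets of a minor. -/
theorem graphMinor_of_potentials {ι V : Type*} [LinearOrder ι] {G : SimpleGraph V}
    (H : SimpleGraph ι) (κ : ι → V → ℕ) (p : ι → V) (N : ℕ)
    (lip : ∀ i u v, G.Adj u v → κ i u ≤ κ i v + 1)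
    (desc : ∀ i y, κ i y < N → y ≠ p i → ∃ y', G.Adj y y' ∧ κ i y' + 1 = κ i y)
    (hN : ∀ i, κ i (p i) < N)
    (own : ∀ i j, i ≠ j → κ i (p i) < κ j (p i))
    (adj : ∀ i j, H.Adj i j → ∃ c, κ i c < N ∧ κ j c < N ∧
      ∀ k, k ≠ i → k ≠ j → κ i c < κ k c ∧ κ j c < κ k c) :
    GraphMinor H G := by
  set cell : ι → Set V :=
    fun i => {y | κ i y < N ∧ ∀ j, κ i y < κ j y ∨ κ i y = κ j y ∧ i ≤ j} with hcell
  have own_mem : ∀ i, p i ∈ cell i := fun i => by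
    refine ⟨hN i, fun j => ?_⟩
    by_cases hij : i = j
    · subst hij; exact Or.inr ⟨rfl, le_rfl⟩
    · exact Or.inl (own i j hij)
  have cross : ∀ i j, i ≠ j → ∀ n y, κ i y = n → κ i y < N → κ j y < N → y ∈ cell j →
      (∀ k, k ≠ i → k ≠ j → κ i y < κ k y) → ∃ u ∈ cell i, ∃ v ∈ cell j, G.Adj u v := by
    intro i j hij n
    induction n with
    | zero =>
      intro y hy hyN hjN hyj hk
      have hne : y ≠ p i := by
        rintro rfl
        have := own i j hij
        have := hyj.2 i
        omega
      obtain ⟨y', _, hy'⟩ := desc i y hyN hne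
      omega
    | succ n ih =>
      intro y hy hyN hjN hyj hk
      have hne : y ≠ p i := by
        rintro rfl
        have := own i j hij
        have := hyj.2 i
        omega
      obtain ⟨y', hyy', hy'⟩ := desc i y hyN hne
      have hk' : ∀ k, k ≠ i → k ≠ j → κ i y' < κ k y' := by
        intro k hki hkj
        have := hk k hki hkj
        have := lip k y y' hyy'
        omega
      by_cases hmem : κ i y' < κ j y' ∨ κ i y' = κ j y' ∧ i ≤ j
      · refine ⟨y', ⟨by omega, fun k => ?_⟩, y, hyj, hyy'.symm⟩
        by_cases hki : k = i
        · subst hki; exact Or.inr ⟨rfl, le_rfl⟩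
        · by_cases hkj : k = j
          · subst hkj; exact hmem
          · exact Or.inl (hk' k hki hkj)
      · have hle : κ j y' ≤ κ i y' := by
          by_contra hlt
          exact hmem (Or.inl (by omega))
        refine ih y' (by omega) (by omega) (by omega) ⟨by omega, fun k => ?_⟩ hk'
        by_cases hki : k = i
        · subst hki
          rcases hle.lt_or_eq with hlt | heq
          · exact Or.inl hlt
          · refine Or.inr ⟨heq, ?_⟩
            by_contra hle'
            exact hmem (Or.inr ⟨heq.symm, (not_le.1 hle').le⟩)
        · by_cases hkj : k = j
          · subst hkj; exact Or.inr ⟨rfl, le_rfl⟩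
          · have := hk' k hki hkj
            exact Or.inl (by omega)
  refine ⟨cell, fun i => ?_, fun i j hij => ?_, fun i j hij => ?_⟩
  · refine SimpleGraph.induce_connected_of_reflTransGen (own_mem i) ?_
    have key : ∀ n y, κ i y = n → y ∈ cell i →
        Relation.ReflTransGen (fun a b => G.Adj a b ∧ a ∈ cell i ∧ b ∈ cell i) (p i) y := by
      intro n
      induction n with
      | zero =>
        intro y hy hyi
        by_cases hne : y = p i
        · subst hne; exact .refl
        · obtain ⟨y', _, hy'⟩ := desc i y hyi.1 hne
          omega
      | succ n ih =>
        intro y hy hyi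
        by_cases hne : y = p i
        · subst hne; exact .refl
        · obtain ⟨y', hyy', hy'⟩ := desc i y hyi.1 hne
          have hmem : y' ∈ cell i := by
            refine ⟨by have := hyi.1; omega, fun j => ?_⟩
            have h1 := lip j y y' hyy'
            rcases hyi.2 j with h | ⟨h, hij⟩
            · exact Or.inl (by omega)
            · by_cases hlt : κ i y' < κ j y'
              · exact Or.inl hlt
              · exact Or.inr ⟨by omega, hij⟩
          exact (ih y' (by omega) hmem).tail ⟨hyy'.symm, hmem, hyi⟩
    exact fun y hy => key _ y rfl hy
  · refine Set.disjoint_left.2 fun y hyi hyj => ?_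
    rcases hyi.2 j with h | ⟨h, hle⟩ <;> rcases hyj.2 i with h' | ⟨h', hle'⟩
    any_goals omega
    exact hij (le_antisymm hle hle')
  · obtain ⟨c, hi, hj, hk⟩ := adj i j hij
    have hne := hij.ne
    rcases lt_trichotomy (κ i c) (κ j c) with h | h | h
    · obtain ⟨u, hu, v, hv, huv⟩ := cross j i hne.symm _ c rfl hj hi
        ⟨hi, fun k => by
          by_cases hki : k = i
          · subst hki; exact Or.inr ⟨rfl, le_rfl⟩
          · by_cases hkj : k = j
            · subst hkj; exact Or.inl h
            · exact Or.inl (hk k hki hkj).1⟩ (fun k hkj hki => (hk k hki hkj).2)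
      exact ⟨v, hv, u, hu, huv.symm⟩
    · rcases le_total i j with hle | hle
      · obtain ⟨u, hu, v, hv, huv⟩ := cross j i hne.symm _ c rfl hj hi
          ⟨hi, fun k => by
            by_cases hki : k = i
            · subst hki; exact Or.inr ⟨rfl, le_rfl⟩
            · by_cases hkj : k = j
              · subst hkj; exact Or.inr ⟨h, hle⟩
              · exact Or.inl (hk k hki hkj).1⟩ (fun k hkj hki => (hk k hki hkj).2)
        exact ⟨v, hv, u, hu, huv.symm⟩
      · exact cross i j hne _ c rfl hi hj
          ⟨hj, fun k => by
            by_cases hkj : k = j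
            · subst hkj; exact Or.inr ⟨rfl, le_rfl⟩
            · by_cases hki : k = i
              · subst hki; exact Or.inr ⟨h.symm, hle⟩
              · exact Or.inl (hk k hki hkj).2⟩ (fun k hki hkj => (hk k hki hkj).1)
    · exact cross i j hne _ c rfl hi hj
        ⟨hj, fun k => by
          by_cases hkj : k = j
          · subst hkj; exact Or.inr ⟨rfl, le_rfl⟩
          · by_cases hki : k = i
            · subst hki; exact Or.inl h
            · exact Or.inl (hk k hki hkj).2⟩ (fun k hki hkj => (hk k hki hkj).1)

namespace SimpleGraph

variable {V : Type*} (G : SimpleGraph V)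

/-- The distance from `p`, with unreachable vertices sent to a given value, offset by `a`. -/
noncomputable def offsetDist (a N : ℕ) (p y : V) : ℕ :=
  open Classical in if G.Reachable p y then a + G.dist p y else N

theorem offsetDist_le_add_one (a N : ℕ) (p : V) {u v : V} (h : G.Adj u v) :
    G.offsetDist a N p u ≤ G.offsetDist a N p v + 1 := by
  unfold offsetDist
  by_cases hv : G.Reachable p v
  · have hu : G.Reachable p u := hv.trans h.symm.reachable
    rw [if_pos hu, if_pos hv]
    have := hv.dist_triangle_left u
    have := dist_eq_one_iff_adj.2 h.symm
    omega
  · have hu : ¬ G.Reachable p u := fun hu => hv (hu.trans h.reachable)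
    rw [if_neg hu, if_neg hv]
    omega

theorem exists_offsetDist_add_one (a N : ℕ) (p : V) {y : V} (hy : G.offsetDist a N p y < N)
    (hne : y ≠ p) : ∃ y', G.Adj y y' ∧ G.offsetDist a N p y' + 1 = G.offsetDist a N p y := by
  unfold offsetDist at hy ⊢
  have hr : G.Reachable p y := by
    by_contra hr
    rw [if_neg hr] at hy
    omega
  obtain ⟨w, hw⟩ := hr.symm.exists_walk_length_eq_dist
  cases w with
  | nil => exact absurd rfl hne
  | @cons _ y' _ h q =>
    refine ⟨y', h, ?_⟩
    have hr' : G.Reachable p y' := hr.trans h.reachable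
    rw [if_pos hr', if_pos hr]
    have h1 := dist_le q
    rw [dist_comm] at h1
    rw [dist_comm, Walk.length_cons] at hw
    have := hr'.dist_triangle_left y
    have := dist_eq_one_iff_adj.2 h.symm
    omega

/-- Balls, none containing another: pairs sharing a vertex that lies in no third ball span a
minor. -/
theorem graphMinor_of_balls [Fintype V] {ι : Type*} [Fintype ι] (H : SimpleGraph ι)
    (p : ι → V) (r : ι → ℕ)
    (anti : ∀ i j, i ≠ j → ¬ G.gBall (p i) (r i) ⊆ G.gBall (p j) (r j))
    (adj : ∀ i j, H.Adj i j → ∃ c, c ∈ G.gBall (p i) (r i) ∧ c ∈ G.gBall (p j) (r j) ∧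
      ∀ k, k ≠ i → k ≠ j → c ∉ G.gBall (p k) (r k)) :
    GraphMinor H G := by
  let _ : LinearOrder ι := LinearOrder.lift' (Fintype.equivFin ι) (Fintype.equivFin ι).injective
  set R := ∑ i, r i with hR
  have hrR : ∀ i, r i ≤ R := fun i => Finset.single_le_sum (fun _ _ => Nat.zero_le _) (by simp)
  set D := ∑ u, ∑ v, G.dist u v with hD
  have hdD : ∀ u v, G.dist u v ≤ D := fun u v =>
    (Finset.single_le_sum (f := fun v => G.dist u v) (fun _ _ => Nat.zero_le _)
      (Finset.mem_univ v)).trans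
      (Finset.single_le_sum (f := fun u => ∑ v, G.dist u v) (fun _ _ => Nat.zero_le _)
      (Finset.mem_univ u))
  have mem : ∀ i c, c ∈ G.gBall (p i) (r i) ↔ G.offsetDist (R - r i) (R + D + 1) (p i) c ≤ R := by
    intro i c
    have := hrR i
    unfold offsetDist gBall
    by_cases h : G.Reachable (p i) c
    · simp only [h, Set.mem_ofPred_eq, true_and, if_true]; omega
    · simp only [h, Set.mem_ofPred_eq, false_and, if_false, false_iff]; omega
  have self : ∀ i, G.offsetDist (R - r i) (R + D + 1) (p i) (p i) = R - r i := by
    intro i; simp [offsetDist]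
  refine graphMinor_of_potentials H (fun i => G.offsetDist (R - r i) (R + D + 1) (p i)) p
    (R + D + 1) (fun i u v h => G.offsetDist_le_add_one _ _ _ h)
    (fun i y hy hne => G.exists_offsetDist_add_one _ _ _ hy hne)
    (fun i => by simp only [self]; omega) (fun i j hij => ?_) (fun i j hij => ?_)
  · by_contra hlt
    simp only [self, not_lt] at hlt
    have hri := hrR i
    have hrj := hrR j
    refine anti i j hij fun c hc => ?_
    unfold offsetDist at hlt
    by_cases h : G.Reachable (p j) (p i)
    · rw [if_pos h] at hlt
      refine ⟨h.trans hc.1, ?_⟩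
      have := h.dist_triangle_left c
      have := hc.2
      omega
    · rw [if_neg h] at hlt
      omega
  · obtain ⟨c, hi, hj, hk⟩ := adj i j hij
    refine ⟨c, ?_⟩
    rw [mem] at hi hj
    refine ⟨by omega, by omega, fun k hki hkj => ?_⟩
    have := hk k hki hkj
    rw [mem] at this
    constructor <;> omega

/-- Points all of whose pairs are cut out by balls span a clique minor. -/
theorem graphMinor_of_cut_pairs [Fintype V] {ι : Type*} [Fintype ι] (H : SimpleGraph ι) (p : ι → V)
    (inj : Function.Injective p)
    (adj : ∀ i j, H.Adj i j → ∃ c r, p i ∈ G.gBall c r ∧ p j ∈ G.gBall c r ∧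
      ∀ k, k ≠ i → k ≠ j → p k ∉ G.gBall c r) :
    GraphMinor H G := by
  let _ : LinearOrder ι := LinearOrder.lift' (Fintype.equivFin ι) (Fintype.equivFin ι).injective
  set D := ∑ u, ∑ v, G.dist u v with hD
  have hdD : ∀ u v, G.dist u v ≤ D := fun u v =>
    (Finset.single_le_sum (f := fun v => G.dist u v) (fun _ _ => Nat.zero_le _)
      (Finset.mem_univ v)).trans
      (Finset.single_le_sum (f := fun u => ∑ v, G.dist u v) (fun _ _ => Nat.zero_le _)
      (Finset.mem_univ u))
  refine graphMinor_of_potentials H (fun i => G.offsetDist 0 (D + 1) (p i)) p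
    (D + 1) (fun i u v h => G.offsetDist_le_add_one _ _ _ h)
    (fun i y hy hne => G.exists_offsetDist_add_one _ _ _ hy hne)
    (fun i => by simp [offsetDist]) (fun i j hij => ?_) (fun i j hij => ?_)
  · have h0 : G.offsetDist 0 (D + 1) (p i) (p i) = 0 := by simp [offsetDist]
    simp only [h0]
    unfold offsetDist
    split_ifs with h
    · have := h.pos_dist_of_ne (fun h => hij (inj h).symm)
      omega
    · omega
  · obtain ⟨c, r, hi, hj, hk⟩ := adj i j hij
    refine ⟨c, ?_⟩
    have e : ∀ i, p i ∈ G.gBall c r → G.offsetDist 0 (D + 1) (p i) c ≤ r ∧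
        G.offsetDist 0 (D + 1) (p i) c ≤ D := by
      intro i hi
      unfold offsetDist
      rw [if_pos hi.1.symm, dist_comm]
      have := hi.2
      have := hdD c (p i)
      omega
    have e1 := e i hi
    have e2 := e j hj
    refine ⟨by omega, by omega, fun k hki hkj => ?_⟩
    have hk := hk k hki hkj
    simp only [gBall, Set.mem_ofPred_eq, not_and, not_le] at hk
    unfold offsetDist at e1 e2 ⊢
    by_cases hr : G.Reachable (p k) c
    · have h1 := hk hr.symm
      rw [dist_comm] at h1
      rw [if_pos hr]
      constructor <;> omega
    · rw [if_neg hr]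
      constructor <;> omega

end SimpleGraph

open Finset Classical in
/-- A random tuple from `R` dominates almost all of `W` and escapes every set of a given family of
small sets. -/
theorem exists_dominating_tuple {α : Type*} (W R : Finset α) (Adj : α → α → Prop) (r t : ℕ)
    (hr : 18 ≤ r) (ht : t ≤ 2 ^ (r ^ 2)) (hW : 0 < #W) (hRW : #R ≤ #W)
    (hR : ∀ u ∈ W, #W ≤ 100 * #{y ∈ R | Adj u y})
    (A : ℕ → Finset α) (hA : ∀ i < t, #(A i) * 2 ^ r ≤ 4 * #W) :
    ∃ f : Fin (69 * r) → α, (∀ i, f i ∈ R) ∧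
      #{u ∈ W | ∀ i, ¬ Adj u (f i)} * 2 ^ r ≤ 4 * #W ∧ ∀ i < t, ∃ k, f k ∉ A i := by
  set s := 69 * r with hs
  set F := Fintype.piFinset (fun _ : Fin s => R) with hF
  have hFc : #F = #R ^ s := by simp [hF]
  have hRpos : #W ≤ 100 * #R := by
    obtain ⟨u, hu⟩ := card_pos.1 hW
    exact (hR u hu).trans (Nat.mul_le_mul_left _ (card_filter_le _ _))
  have hN : 0 < #R ^ s := pow_pos (by omega) _
  have h99 : 2 ^ r * 99 ^ s ≤ 100 ^ s := by
    rw [hs, pow_mul, pow_mul, ← mul_pow]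
    exact Nat.pow_le_pow_left (by norm_num) r
  have hund : ∀ u ∈ W, 2 ^ r * #{f ∈ F | ∀ i, ¬ Adj u (f i)} ≤ #R ^ s := by
    intro u hu
    have h1 : {f ∈ F | ∀ i, ¬ Adj u (f i)} =
        Fintype.piFinset (fun _ : Fin s => {y ∈ R | ¬ Adj u y}) := by
      ext f
      simp [hF, Fintype.mem_piFinset, forall_and]
    rw [h1, Fintype.card_piFinset_const]
    have h2 := card_filter_add_card_filter_not (s := R) (fun y => Adj u y)
    have h3 := hR u hu
    have h4 : 100 * #{y ∈ R | ¬ Adj u y} ≤ 99 * #R := by omega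
    have h5 := Nat.pow_le_pow_left h4 s
    rw [mul_pow, mul_pow] at h5
    have h6 : (2 ^ r * #{y ∈ R | ¬ Adj u y} ^ s) * 100 ^ s ≤ #R ^ s * 100 ^ s := by
      calc _ = 2 ^ r * (100 ^ s * #{y ∈ R | ¬ Adj u y} ^ s) := by ring
        _ ≤ 2 ^ r * (99 ^ s * #R ^ s) := Nat.mul_le_mul_left _ h5
        _ = (2 ^ r * 99 ^ s) * #R ^ s := by ring
        _ ≤ 100 ^ s * #R ^ s := Nat.mul_le_mul_right _ h99
        _ = _ := by ring
    exact Nat.le_of_mul_le_mul_right h6 (by positivity)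
  have hbad1 : 4 * #{f ∈ F | 4 * #W < #{u ∈ W | ∀ i, ¬ Adj u (f i)} * 2 ^ r} ≤ #R ^ s := by
    have h1 : ∑ f ∈ F, #{u ∈ W | ∀ i, ¬ Adj u (f i)} = ∑ u ∈ W, #{f ∈ F | ∀ i, ¬ Adj u (f i)} :=
      (sum_card_bipartiteAbove_eq_sum_card_bipartiteBelow (s := W) (t := F)
        (fun (u : α) (f : Fin s → α) => ∀ i, ¬ Adj u (f i))).symm
    have h2 : 2 ^ r * ∑ f ∈ F, #{u ∈ W | ∀ i, ¬ Adj u (f i)} ≤ #W * #R ^ s := by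
      rw [h1, mul_sum]
      exact (sum_le_card_nsmul _ _ _ hund).trans (by simp)
    have h3 : #{f ∈ F | 4 * #W < #{u ∈ W | ∀ i, ¬ Adj u (f i)} * 2 ^ r} * (4 * #W) ≤
        2 ^ r * ∑ f ∈ F, #{u ∈ W | ∀ i, ¬ Adj u (f i)} := by
      rw [mul_sum]
      refine le_trans ?_ (sum_le_sum_of_subset (filter_subset
        (fun f => 4 * #W < #{u ∈ W | ∀ i, ¬ Adj u (f i)} * 2 ^ r) F))
      rw [← smul_eq_mul]
      refine card_nsmul_le_sum _ _ _ fun f hf => ?_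
      rw [mul_comm (2 ^ r)]
      exact (mem_filter.1 hf).2.le
    refine (Nat.mul_le_mul_left_iff hW).1 ?_
    calc _ = #{f ∈ F | 4 * #W < #{u ∈ W | ∀ i, ¬ Adj u (f i)} * 2 ^ r} * (4 * #W) := by ring
      _ ≤ _ := h3.trans h2
  have hbad2 : 2 * ∑ i ∈ range t, #{f ∈ F | ∀ k, f k ∈ A i} ≤ #R ^ s := by
    have h1 : ∀ i ∈ range t, (2 * 2 ^ r ^ 2) * #{f ∈ F | ∀ k, f k ∈ A i} ≤ #R ^ s := by
      intro i hi
      have h2 : #{f ∈ F | ∀ k, f k ∈ A i} ≤ #(A i) ^ s := by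
        rw [← Fintype.card_piFinset_const (A i) s]
        refine card_le_card fun f hf => ?_
        simpa [Fintype.mem_piFinset] using (mem_filter.1 hf).2
      have h3 : #(A i) * 2 ^ (r - 9) ≤ #R := by
        have h4 := hA i (mem_range.1 hi)
        have h5 : 2 ^ r = 2 ^ (r - 9) * 512 := by
          rw [show (512 : ℕ) = 2 ^ 9 by norm_num, ← pow_add]; congr 1; omega
        rw [h5, ← mul_assoc] at h4
        omega
      have h4 := Nat.pow_le_pow_left h3 s
      rw [mul_pow, ← pow_mul] at h4
      have h5 : 2 * 2 ^ r ^ 2 ≤ 2 ^ ((r - 9) * s) := by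
        rw [← pow_succ']
        refine Nat.pow_le_pow_right (by norm_num) ?_
        obtain ⟨q, rfl⟩ := Nat.exists_eq_add_of_le hr
        have : 18 + q - 9 = 9 + q := by omega
        rw [this, hs]
        nlinarith
      calc _ ≤ 2 ^ ((r - 9) * s) * #(A i) ^ s := Nat.mul_le_mul h5 h2
        _ ≤ _ := by rw [mul_comm]; exact h4
    have h2 := sum_le_card_nsmul _ _ _ h1
    rw [← mul_sum, card_range, smul_eq_mul] at h2
    have h3 := h2.trans (Nat.mul_le_mul_right _ ht)
    refine (Nat.mul_le_mul_left_iff (show 0 < 2 ^ r ^ 2 by positivity)).1 ?_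
    calc _ = 2 * 2 ^ r ^ 2 * ∑ i ∈ range t, #{f ∈ F | ∀ k, f k ∈ A i} := by ring
      _ ≤ _ := h3
  set bad := {f ∈ F | 4 * #W < #{u ∈ W | ∀ i, ¬ Adj u (f i)} * 2 ^ r} ∪
    (range t).biUnion fun i => {f ∈ F | ∀ k, f k ∈ A i} with hbad
  have hlt : #bad < #F := by
    have h1 := card_union_le {f ∈ F | 4 * #W < #{u ∈ W | ∀ i, ¬ Adj u (f i)} * 2 ^ r}
      ((range t).biUnion fun i => {f ∈ F | ∀ k, f k ∈ A i})
    have h2 := card_biUnion_le (s := range t) (t := fun i => {f ∈ F | ∀ k, f k ∈ A i})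
    rw [← hbad] at h1
    omega
  obtain ⟨f, hf, hfb⟩ := exists_mem_notMem_of_card_lt_card hlt
  refine ⟨f, by simpa [hF] using hf, ?_, fun i hi => ?_⟩
  · by_contra h
    exact hfb (mem_union_left _ (mem_filter.2 ⟨hf, not_le.1 h⟩))
  · by_contra! h
    exact hfb (mem_union_right _ (mem_biUnion.2 ⟨i, mem_range.2 hi, mem_filter.2 ⟨hf, h⟩⟩))

open Finset Classical in
/-- If after deleting any few vertices of `W` some vertex or edge has a neighborhood meeting every
neighborhood in a positive proportion, then there is a large clique minor. -/
theorem graphMinor_top_of_hubs {V : Type*} (G : SimpleGraph V) (W : Finset V) (r t : ℕ)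
    (hr : 18 ≤ r) (ht : t ≤ 2 ^ (r ^ 2)) (hW : 100 * (t * (69 * r + 2)) ≤ #W) (hW0 : 0 < #W)
    (hub : ∀ X ⊆ W, 100 * #X ≤ #W → ∃ z₁ ∈ W \ X, ∃ z₂ ∈ W \ X, (z₁ = z₂ ∨ G.Adj z₁ z₂) ∧
      ∀ u ∈ W, #W ≤ 100 * #{y ∈ W \ X | (G.Adj z₁ y ∨ G.Adj z₂ y) ∧ G.Adj u y}) :
    GraphMinor (⊤ : SimpleGraph (Fin t)) G := by
  have key : ∀ j ≤ t, ∃ B : ℕ → Finset V,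
      (∀ i < j, B i ⊆ W ∧ #(B i) ≤ 69 * r + 2 ∧ (G.induce (B i : Set V)).Connected ∧
        #{u ∈ W | ∀ b ∈ B i, ¬ G.Adj u b} * 2 ^ r ≤ 4 * #W) ∧
      ∀ i k, i < k → k < j → Disjoint (B i) (B k) ∧ ∃ a ∈ B i, ∃ b ∈ B k, G.Adj a b := by
    intro j
    induction j with
    | zero => exact fun _ => ⟨fun _ => ∅, by simp, by simp⟩
    | succ j ih =>
      intro hj
      obtain ⟨B, hB, hBB⟩ := ih (by omega)
      set X := (range j).biUnion B with hX
      have hXW : X ⊆ W := biUnion_subset.2 fun i hi => (hB i (mem_range.1 hi)).1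
      have hXc : 100 * #X ≤ #W := by
        have h1 : #X ≤ j * (69 * r + 2) := by
          refine (card_biUnion_le_card_mul _ _ _ fun i hi => (hB i (mem_range.1 hi)).2.1).trans ?_
          simp
        have h2 : j * (69 * r + 2) ≤ t * (69 * r + 2) := Nat.mul_le_mul_right _ (by omega)
        omega
      obtain ⟨z₁, hz₁, z₂, hz₂, hz, hu⟩ := hub X hXW hXc
      set R := {y ∈ W \ X | G.Adj z₁ y ∨ G.Adj z₂ y} with hR
      have hRW : R ⊆ W \ X := filter_subset _ _
      obtain ⟨f, hfR, hf1, hf2⟩ := exists_dominating_tuple W R G.Adj r j hr (by omega) hW0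
        (card_le_card (hRW.trans sdiff_subset))
        (fun u huW => by rw [hR, filter_filter]; exact hu u huW)
        (fun i => {u ∈ W | ∀ b ∈ B i, ¬ G.Adj u b}) (fun i hi => (hB i hi).2.2.2)
      set C := insert z₁ (insert z₂ (univ.image f)) with hC
      have hCX : C ⊆ W \ X := by
        intro x hx
        simp only [hC, mem_insert, mem_image, mem_univ, true_and] at hx
        rcases hx with rfl | rfl | ⟨i, rfl⟩
        · exact hz₁
        · exact hz₂
        · exact hRW (hfR i)
      have hfC : ∀ i, f i ∈ C := fun i => by simp [hC]
      refine ⟨Function.update B j C, fun i hi => ?_, fun i k hik hk => ?_⟩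
      · rcases (Nat.lt_succ_iff_lt_or_eq.1 hi) with hi | rfl
        · rw [Function.update_of_ne hi.ne]
          exact hB i hi
        · rw [Function.update_self]
          refine ⟨hCX.trans sdiff_subset, ?_, ?_, ?_⟩
          · refine (card_insert_le _ _).trans (Nat.add_le_add_right ((card_insert_le _ _).trans
              (Nat.add_le_add_right (card_image_le.trans ?_) _)) _)
            simp
          · have hz1C : z₁ ∈ (C : Set V) := by simp [hC]
            have hz2C : z₂ ∈ (C : Set V) := by simp [hC]
            have h12 : Relation.ReflTransGen
                (fun a b => G.Adj a b ∧ a ∈ (C : Set V) ∧ b ∈ (C : Set V)) z₁ z₂ := by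
              rcases hz with rfl | h
              · exact .refl
              · exact .single ⟨h, hz1C, hz2C⟩
            refine SimpleGraph.induce_connected_of_reflTransGen hz1C fun v hv => ?_
            have hv' := hv
            simp only [hC, coe_insert, Set.mem_insert_iff, mem_coe, mem_image, mem_univ,
              true_and] at hv'
            rcases hv' with rfl | rfl | ⟨i, rfl⟩
            · exact .refl
            · exact h12
            · rcases (mem_filter.1 (hfR i)).2 with h | h
              · exact .single ⟨h, hz1C, hv⟩
              · exact h12.tail ⟨h, hz2C, hv⟩
          · refine le_trans (Nat.mul_le_mul_right _ (card_le_card fun u hu => ?_)) hf1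
            rw [mem_filter] at hu ⊢
            exact ⟨hu.1, fun i => hu.2 _ (hfC i)⟩
      · rcases (Nat.lt_succ_iff_lt_or_eq.1 hk) with hk | rfl
        · rw [Function.update_of_ne hk.ne, Function.update_of_ne (hik.trans hk).ne]
          exact hBB i k hik hk
        · rw [Function.update_self, Function.update_of_ne hik.ne]
          constructor
          · refine disjoint_left.2 fun x hx hxC => ?_
            exact (mem_sdiff.1 (hCX hxC)).2 (mem_biUnion.2 ⟨i, mem_range.2 hik, hx⟩)
          · obtain ⟨l, hl⟩ := hf2 i hik
            have hlW := (mem_sdiff.1 (hRW (hfR l))).1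
            simp only [mem_filter, hlW, true_and, not_forall, not_not] at hl
            obtain ⟨b, hb, hlb⟩ := hl
            exact ⟨b, hb, f l, hfC l, hlb.symm⟩
  obtain ⟨B, hB, hBB⟩ := key t le_rfl
  refine ⟨fun i => B i, fun i => (hB i i.2).2.2.1, fun i k hik => ?_, fun i k hik => ?_⟩
  · rcases lt_or_gt_of_ne hik with h | h
    · exact disjoint_coe.2 (hBB i k h k.2).1
    · exact disjoint_coe.2 (hBB k i h i.2).1.symm
  · rcases lt_or_gt_of_ne hik.ne with h | h
    · obtain ⟨a, ha, b, hb, hab⟩ := (hBB i k h k.2).2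
      exact ⟨a, ha, b, hb, hab⟩
    · obtain ⟨a, ha, b, hb, hab⟩ := (hBB k i h i.2).2
      exact ⟨b, hb, a, ha, hab.symm⟩

open Finset Classical in
theorem graphMinor_top_of_dense {V : Type*} (G : SimpleGraph V) (W : Finset V) (r t : ℕ)
    (hr : 18 ≤ r) (ht : t ≤ 2 ^ (r ^ 2)) (hW : 300 * (t * (69 * r + 2)) ≤ #W) (hW0 : 0 < #W)
    (hdeg : ∀ u ∈ W, #W ≤ 2 * #{y ∈ W | G.Adj u y}) :
    GraphMinor (⊤ : SimpleGraph (Fin t)) G := by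
  by_cases hub : ∀ X ⊆ W, 100 * #X ≤ #W → ∃ z₁ ∈ W \ X, ∃ z₂ ∈ W \ X, (z₁ = z₂ ∨ G.Adj z₁ z₂) ∧
      ∀ u ∈ W, #W ≤ 100 * #{y ∈ W \ X | (G.Adj z₁ y ∨ G.Adj z₂ y) ∧ G.Adj u y}
  · exact graphMinor_top_of_hubs G W r t hr ht (by omega) hW0 hub
  push Not at hub
  obtain ⟨X, hXW, hX, hub⟩ := hub
  have hdegX : ∀ u ∈ W, 49 * #W ≤ 100 * #{y ∈ W \ X | G.Adj u y} := by
    intro u hu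
    have h1 := hdeg u hu
    have h2 : #{y ∈ W | G.Adj u y} ≤ #{y ∈ W \ X | G.Adj u y} + #X := by
      refine le_trans (card_le_card fun y hy => ?_) (card_union_le _ _)
      rw [mem_filter] at hy
      by_cases hyX : y ∈ X
      · exact mem_union_right _ hyX
      · exact mem_union_left _ (mem_filter.2 ⟨mem_sdiff.2 ⟨hy.1, hyX⟩, hy.2⟩)
    omega
  obtain ⟨z, hzW, hzX⟩ : ∃ z ∈ W, z ∉ X := exists_mem_notMem_of_card_lt_card (by omega)
  set W' := {y ∈ W \ X | G.Adj z y} with hW'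
  have hW'c : 49 * #W ≤ 100 * #W' := hdegX z hzW
  have hnon : ∀ y ∈ W', 100 * #{x ∈ W' | ¬ G.Adj y x} ≤ 2 * #W := by
    intro y hy
    have hy' := mem_filter.1 hy
    obtain ⟨u, hu, hlt⟩ := hub z (mem_sdiff.2 ⟨hzW, hzX⟩) y hy'.1 (Or.inr hy'.2)
    have h1 := hdeg u hu
    have h2 := hdegX y (mem_sdiff.1 hy'.1).1
    have h3 := card_union_add_card_inter {x ∈ W | G.Adj u x}
      {x ∈ W \ X | G.Adj z x ∨ G.Adj y x}
    have h4 : #({x ∈ W | G.Adj u x} ∪ {x ∈ W \ X | G.Adj z x ∨ G.Adj y x}) ≤ #W :=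
      card_le_card (union_subset (filter_subset _ _) ((filter_subset _ _).trans sdiff_subset))
    have h5 : #({x ∈ W | G.Adj u x} ∩ {x ∈ W \ X | G.Adj z x ∨ G.Adj y x}) ≤
        #{x ∈ W \ X | (G.Adj z x ∨ G.Adj y x) ∧ G.Adj u x} := by
      refine card_le_card fun x hx => ?_
      simp only [mem_inter, mem_filter] at hx ⊢
      exact ⟨hx.2.1, hx.2.2, hx.1.2⟩
    have h6 : #{x ∈ W' | ¬ G.Adj y x} + #{x ∈ W \ X | G.Adj y x} ≤
        #{x ∈ W \ X | G.Adj z x ∨ G.Adj y x} := by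
      rw [← card_union_of_disjoint]
      · refine card_le_card fun x hx => ?_
        simp only [hW', mem_union, mem_filter] at hx ⊢
        tauto
      · refine disjoint_left.2 fun x hx hx' => ?_
        simp only [mem_filter] at hx hx'
        exact hx.2 hx'.2
    omega
  refine graphMinor_top_of_hubs G W' r t hr ht (by omega) (by omega) fun Y hYW hY => ?_
  obtain ⟨z', hz', hz'Y⟩ : ∃ z ∈ W', z ∉ Y := exists_mem_notMem_of_card_lt_card (by omega)
  refine ⟨z', mem_sdiff.2 ⟨hz', hz'Y⟩, z', mem_sdiff.2 ⟨hz', hz'Y⟩, Or.inl rfl, fun u hu => ?_⟩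
  have h1 := hnon z' hz'
  have h2 := hnon u hu
  have h3 : #W' ≤ #{y ∈ W' \ Y | (G.Adj z' y ∨ G.Adj z' y) ∧ G.Adj u y} + #Y +
      #{x ∈ W' | ¬ G.Adj z' x} + #{x ∈ W' | ¬ G.Adj u x} := by
    refine le_trans (card_le_card fun y hy => ?_) ((card_union_le _ _).trans
      (Nat.add_le_add_right ((card_union_le _ _).trans
        (Nat.add_le_add_right (card_union_le _ _) _)) _))
    simp only [mem_union, mem_filter, mem_sdiff]
    tauto
  omega

open Finset Classical in
/-- The number of ordered adjacent pairs, i.e. twice the number of edges. -/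
noncomputable def SimpleGraph.adjPairs {V : Type*} [Fintype V] (G : SimpleGraph V) : ℕ :=
  #{p : V × V | G.Adj p.1 p.2}

namespace SimpleGraph

open Finset Classical

variable {V : Type*} [Fintype V] (G : SimpleGraph V)

theorem adjPairs_eq_sum : G.adjPairs = ∑ v, #{w | G.Adj v w} := by
  unfold adjPairs
  simp only [card_filter]
  exact Fintype.sum_prod_type _

theorem adjPairs_induce_ne (v : V) :
    (G.induce {x | x ≠ v}).adjPairs = #{p : V × V | p.1 ≠ v ∧ p.2 ≠ v ∧ G.Adj p.1 p.2} := by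
  unfold adjPairs
  refine card_bij (fun p _ => (p.1.1, p.2.1)) ?_ ?_ ?_
  · intro p hp
    simp only [mem_filter, mem_univ, true_and] at hp ⊢
    exact ⟨p.1.2, p.2.2, hp⟩
  · rintro ⟨a, b⟩ _ ⟨c, d⟩ _ h
    simp only [Prod.mk.injEq] at h
    exact Prod.ext (Subtype.ext h.1) (Subtype.ext h.2)
  · rintro ⟨a, b⟩ h
    simp only [mem_filter, mem_univ, true_and] at h
    exact ⟨(⟨a, h.1⟩, ⟨b, h.2.1⟩), by simpa using h.2.2, rfl⟩

theorem adjPairs_le_of_ne (v : V) :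
    G.adjPairs ≤ #{p : V × V | p.1 ≠ v ∧ p.2 ≠ v ∧ G.Adj p.1 p.2} + 2 * #{w | G.Adj v w} := by
  unfold adjPairs
  have h : ({p : V × V | G.Adj p.1 p.2} : Finset (V × V)) ⊆
      ({p : V × V | p.1 ≠ v ∧ p.2 ≠ v ∧ G.Adj p.1 p.2} : Finset (V × V)) ∪
      (({w | G.Adj v w} : Finset V).image (fun w => (v, w)) ∪
        ({w | G.Adj v w} : Finset V).image (fun w => (w, v))) := by
    rintro ⟨a, b⟩ hab
    simp only [mem_union, mem_filter, mem_univ, true_and, mem_image, Prod.mk.injEq] at hab ⊢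
    by_cases ha : a = v
    · subst ha; exact Or.inr (Or.inl ⟨b, hab, rfl, rfl⟩)
    · by_cases hb : b = v
      · subst hb; exact Or.inr (Or.inr ⟨a, hab.symm, rfl, rfl⟩)
      · exact Or.inl ⟨ha, hb, hab⟩
  have h1 := card_le_card h
  have h2 := card_union_le ({p : V × V | p.1 ≠ v ∧ p.2 ≠ v ∧ G.Adj p.1 p.2} : Finset (V × V))
    (({w | G.Adj v w} : Finset V).image (fun w => (v, w)) ∪
        ({w | G.Adj v w} : Finset V).image (fun w => (w, v)))
  have h3 := card_union_le (({w | G.Adj v w} : Finset V).image (fun w => (v, w)))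
        (({w | G.Adj v w} : Finset V).image (fun w => (w, v)))
  have h4 := card_image_le (s := ({w | G.Adj v w} : Finset V)) (f := (fun w => (v, w)))
  have h5 := card_image_le (s := ({w | G.Adj v w} : Finset V)) (f := (fun w => (w, v)))
  omega

/-- The graph obtained by contracting the edge `uv` onto `u`. -/
def contractEdge (u v : V) : SimpleGraph {x : V | x ≠ v} :=
  (G ⊔ SimpleGraph.fromRel fun a b => a = u ∧ G.Adj v b).induce {x | x ≠ v}

set_option linter.unusedSectionVars false in
theorem graphMinor_contractEdge {u v : V} (h : G.Adj u v) :
    GraphMinor (G.contractEdge u v) G := by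
  obtain ⟨f, hf1, hf2⟩ : ∃ f : {x : V | x ≠ v} → Set V, (∀ x, x.1 = u → f x = {u, v}) ∧
      ∀ x, x.1 ≠ u → f x = {x.1} :=
    ⟨fun x => if x.1 = u then {u, v} else {x.1}, fun x hx => if_pos hx, fun x hx => if_neg hx⟩
  refine ⟨f, fun x => ?_, fun x y hxy => ?_, fun x y hxy => ?_⟩
  · by_cases hx : x.1 = u
    · rw [hf1 x hx]
      refine induce_connected_of_reflTransGen (u := u) (by simp) fun w hw => ?_
      rcases hw with rfl | rfl
      · exact .refl
      · exact .single ⟨h, by simp, by simp⟩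
    · rw [hf2 x hx]
      refine induce_connected_of_reflTransGen (u := x.1) (by simp) fun w hw => ?_
      rw [Set.mem_singleton_iff] at hw
      subst hw
      exact .refl
  · have hne : x.1 ≠ y.1 := fun h => hxy (Subtype.ext h)
    have hxv : x.1 ≠ v := x.2
    have hyv : y.1 ≠ v := y.2
    change Disjoint (f x) (f y)
    by_cases hx : x.1 = u <;> by_cases hy : y.1 = u
    · exact absurd (hx.trans hy.symm) hne
    · rw [hf1 x hx, hf2 y hy]
      simp [hy, hyv]
    · rw [hf2 x hx, hf1 y hy]
      simp [hx, hxv]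
    · rw [hf2 x hx, hf2 y hy]
      simpa using hne
  · have mem : ∀ z, z.1 ∈ f z := by
      intro z
      by_cases hz : z.1 = u
      · simp [hf1 z hz, hz]
      · simp [hf2 z hz]
    have memv : ∀ z, z.1 = u → v ∈ f z := by
      intro z hz
      simp [hf1 z hz]
    simp only [contractEdge, comap_adj, Function.Embedding.subtype_apply, sup_adj, fromRel_adj]
      at hxy
    rcases hxy with hxy | ⟨_, ⟨hx, hvy⟩ | ⟨hy, hvx⟩⟩
    · exact ⟨x.1, mem x, y.1, mem y, hxy⟩
    · exact ⟨v, memv x hx, y.1, mem y, hvy⟩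
    · exact ⟨x.1, mem x, v, memv y hy, hvx.symm⟩

theorem adjPairs_le_contractEdge {u v : V} (h : G.Adj u v) :
    G.adjPairs ≤ (G.contractEdge u v).adjPairs + 2 * #{w | G.Adj u w ∧ G.Adj v w} + 2 := by
  have h1 := G.adjPairs_le_of_ne v
  set K := G ⊔ SimpleGraph.fromRel fun a b => a = u ∧ G.Adj v b with hK
  set X : Finset V := {w | G.Adj v w ∧ ¬ G.Adj u w ∧ w ≠ u} with hX
  have huv : u ≠ v := h.ne
  have h2 : #{p : V × V | p.1 ≠ v ∧ p.2 ≠ v ∧ G.Adj p.1 p.2} + 2 * #X ≤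
      (G.contractEdge u v).adjPairs := by
    rw [contractEdge, adjPairs_induce_ne]
    have e1 : #(X.image fun w => (u, w)) = #X :=
      card_image_of_injective _ (Prod.mk_right_injective u)
    have e2 : #(X.image fun w => (w, u)) = #X :=
      card_image_of_injective _ (Prod.mk_left_injective u)
    rw [two_mul, ← add_assoc]
    nth_rewrite 1 [← e1]
    rw [← e2, ← card_union_of_disjoint, ← card_union_of_disjoint]
    · refine card_le_card ?_
      rintro ⟨a, b⟩ hab
      simp only [hX, mem_union, mem_filter, mem_univ, true_and, mem_image, Prod.mk.injEq, sup_adj,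
        fromRel_adj] at hab ⊢
      rcases hab with (hab | ⟨w, hw, rfl, rfl⟩) | ⟨w, hw, rfl, rfl⟩
      · exact ⟨hab.1, hab.2.1, Or.inl hab.2.2⟩
      · exact ⟨huv, hw.1.ne', Or.inr ⟨hw.2.2.symm, Or.inl ⟨rfl, hw.1⟩⟩⟩
      · exact ⟨hw.1.ne', huv, Or.inr ⟨hw.2.2, Or.inr ⟨rfl, hw.1⟩⟩⟩
    · rw [Finset.disjoint_left]
      rintro ⟨a, b⟩ hab hab'
      simp only [hX, mem_union, mem_filter, mem_univ, true_and, mem_image, Prod.mk.injEq]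
        at hab hab'
      obtain ⟨w, hw, rfl, rfl⟩ := hab'
      rcases hab with hab | ⟨w', hw', rfl, rfl⟩
      · exact hw.2.1 hab.2.2.symm
      · exact hw'.2.2 rfl
    · rw [Finset.disjoint_left]
      rintro ⟨a, b⟩ hab hab'
      simp only [hX, mem_filter, mem_univ, true_and, mem_image, Prod.mk.injEq] at hab hab'
      obtain ⟨w, hw, rfl, rfl⟩ := hab'
      exact hw.2.1 hab.2.2
  have h3 : #{w | G.Adj v w} ≤ #X + #{w | G.Adj u w ∧ G.Adj v w} + 1 := by
    have : ({w | G.Adj v w} : Finset V) ⊆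
        (X ∪ ({w | G.Adj u w ∧ G.Adj v w} : Finset V)) ∪ {u} := by
      intro w hw
      simp only [hX, mem_union, mem_filter, mem_univ, true_and, mem_singleton] at hw ⊢
      tauto
    refine (card_le_card this).trans ((card_union_le _ _).trans ?_)
    rw [card_singleton]
    exact Nat.add_le_add_right (card_union_le _ _) _
  omega

theorem adjPairs_deleteEdges {u v : V} (h : G.Adj u v) :
    G.adjPairs ≤ (G.deleteEdges {s(u, v)}).adjPairs + 2 ∧
      (G.deleteEdges {s(u, v)}).adjPairs < G.adjPairs := by
  unfold adjPairs
  constructor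
  · have : ({p : V × V | G.Adj p.1 p.2} : Finset (V × V)) ⊆
        ({p : V × V | (G.deleteEdges {s(u, v)}).Adj p.1 p.2} : Finset (V × V)) ∪
          {(u, v), (v, u)} := by
      rintro ⟨a, b⟩ hab
      simp only [mem_union, mem_filter, mem_univ, true_and, deleteEdges_adj, mem_insert,
        mem_singleton, Set.mem_singleton_iff, Sym2.eq_iff, Prod.mk.injEq] at hab ⊢
      tauto
    have h := (card_le_card this).trans (card_union_le _ _)
    have h' := card_insert_le (u, v) ({(v, u)} : Finset (V × V))
    rw [card_singleton] at h'
    convert h.trans (Nat.add_le_add_left h' _)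
    rfl
  · refine card_lt_card (Finset.ssubset_iff_subset_ne.2 ⟨fun p hp => ?_, fun heq => ?_⟩)
    · simp only [mem_filter, mem_univ, true_and, deleteEdges_adj] at hp ⊢
      exact hp.1
    · have : (u, v) ∈ ({p : V × V | G.Adj p.1 p.2} : Finset (V × V)) := by simpa using h
      rw [← heq] at this
      simp at this

end SimpleGraph

open Finset Classical in
/-- The Kostochka–Thomason bound on the number of edges forcing a complete minor. -/
theorem graphMinor_top_of_adjPairs (r t k : ℕ) (hr : 18 ≤ r) (ht : t ≤ 2 ^ (r ^ 2))
    (hk : 300 * (t * (69 * r + 2)) ≤ k) (hk0 : 0 < k) (V : Type) [Fintype V] [Nonempty V]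
    (G : SimpleGraph V) (hG : 2 * k * Fintype.card V ≤ G.adjPairs) :
    GraphMinor (⊤ : SimpleGraph (Fin t)) G := by
  induction hn : Fintype.card V using Nat.strong_induction_on generalizing V with
  | _ n ihV =>
    subst hn
    induction hn : G.adjPairs using Nat.strong_induction_on generalizing G with
    | _ n ih =>
      subst hn
      have hpos : 0 < Fintype.card V := Fintype.card_pos
      by_cases hdel : 2 * k * Fintype.card V + 2 ≤ G.adjPairs
      · obtain ⟨⟨u, v⟩, huv⟩ := card_pos.1 (show 0 < G.adjPairs by omega)
        simp only [mem_filter, mem_univ, true_and] at huv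
        have h := G.adjPairs_deleteEdges huv
        exact (ih _ h.2 (G.deleteEdges {s(u, v)}) (by omega) rfl).mono
          (G.deleteEdges_le _)
      by_cases hiso : ∃ v, ∀ w, ¬ G.Adj v w
      · obtain ⟨v, hv⟩ := hiso
        have h1 := G.adjPairs_le_of_ne v
        rw [← G.adjPairs_induce_ne v] at h1
        have h2 : #{w | G.Adj v w} = 0 := by simp [hv]
        have h3 : Fintype.card {x : V | x ≠ v} + 1 = Fintype.card V := by
          have := Fintype.card_subtype_compl (fun x => x = v)
          simp only [Fintype.card_subtype_eq] at this
          have h : Fintype.card {x : V | x ≠ v} = Fintype.card {x : V // ¬ x = v} :=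
            Fintype.card_congr (Equiv.refl _)
          omega
        have h5 : 2 * k * Fintype.card V = 2 * k * Fintype.card {x : V | x ≠ v} + 2 * k := by
          rw [← h3]; ring
        have hne : Nonempty {x : V | x ≠ v} := by
          by_contra hempty
          have h6 := not_nonempty_iff.1 hempty
          have h7 : (G.induce {x | x ≠ v}).adjPairs = 0 := by
            simp [SimpleGraph.adjPairs]
          omega
        refine (ihV _ (by omega) _ (G.induce {x | x ≠ v}) (by omega) rfl).trans ?_
        refine ⟨fun x => {x.1}, fun x => ?_, fun x y hxy => ?_, fun x y hxy => ?_⟩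
        · refine SimpleGraph.induce_connected_of_reflTransGen (u := x.1) (by simp) fun w hw => ?_
          rw [Set.mem_singleton_iff] at hw
          subst hw
          exact .refl
        · simpa using fun h => hxy (Subtype.ext h)
        · exact ⟨x.1, rfl, y.1, rfl, hxy⟩
      by_cases hcon : ∃ u v, G.Adj u v ∧ #{w | G.Adj u w ∧ G.Adj v w} < k
      · obtain ⟨u, v, huv, hc⟩ := hcon
        have h1 := G.adjPairs_le_contractEdge huv
        have h3 : Fintype.card {x : V | x ≠ v} + 1 = Fintype.card V := by
          have := Fintype.card_subtype_compl (fun x => x = v)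
          simp only [Fintype.card_subtype_eq] at this
          have h : Fintype.card {x : V | x ≠ v} = Fintype.card {x : V // ¬ x = v} :=
            Fintype.card_congr (Equiv.refl _)
          omega
        have h5 : 2 * k * Fintype.card V = 2 * k * Fintype.card {x : V | x ≠ v} + 2 * k := by
          rw [← h3]; ring
        have hne : Nonempty {x : V | x ≠ v} := ⟨⟨u, huv.ne⟩⟩
        exact (ihV _ (by omega) _ (G.contractEdge u v) (by omega) rfl).trans
          (G.graphMinor_contractEdge huv)
      push Not at hiso hcon
      obtain ⟨v, hv⟩ : ∃ v, #{w | G.Adj v w} ≤ 2 * k := by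
        by_contra! h
        have h1 : Fintype.card V * (2 * k + 1) ≤ G.adjPairs := by
          rw [G.adjPairs_eq_sum]
          have := card_nsmul_le_sum univ (fun v => #{w | G.Adj v w}) (2 * k + 1) fun v _ => h v
          simpa using this
        obtain ⟨v⟩ := ‹Nonempty V›
        obtain ⟨w, hw⟩ := hiso v
        have h2 : 1 < Fintype.card V := Fintype.one_lt_card_iff.2 ⟨v, w, hw.ne⟩
        have h3 : Fintype.card V * (2 * k + 1) = 2 * k * Fintype.card V + Fintype.card V := by ring
        omega
      obtain ⟨w, hw⟩ := hiso v
      have hW : ∀ u, G.Adj v u → k ≤ #{y ∈ ({w | G.Adj v w} : Finset V) | G.Adj u y} := by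
        intro u hu
        rw [filter_filter]
        exact hcon v u hu
      have hWk : k ≤ #{w | G.Adj v w} := (hW w hw).trans (card_filter_le _ _)
      refine graphMinor_top_of_dense G {w | G.Adj v w} r t hr ht (by omega) (by omega)
        fun u hu => ?_
      have := hW u (by simpa using hu)
      omega

open Finset Classical in
/-- A polynomial bound on the number of traces of a family of bounded Vapnik–Chervonenkis
dimension on a finite sequence of points. -/
theorem card_traces_le {V α β : Type*} [Fintype α] [Fintype β] (B : β → Finset V) (t : ℕ)
    (hVC : ∀ x : Fin t → V, Function.Injective x →
      ∃ A : Finset (Fin t), ∀ b, ∃ i, ¬ (x i ∈ B b ↔ i ∈ A)) (z : α → V) :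
    #(univ.image fun b => ({a | z a ∈ B b} : Finset α)) ≤ (Fintype.card α + 1) ^ t := by
  set F := univ.image fun b => ({a | z a ∈ B b} : Finset α) with hF
  have hdim : F.vcDim ≤ t := by
    by_contra! h
    obtain ⟨s, hs, hst⟩ : ∃ s ∈ F.shatterer, t < #s := by
      by_contra! hcon
      exact absurd (Finset.sup_le hcon) (not_le.2 h)
    rw [mem_shatterer] at hs
    obtain ⟨s', hs's, hs'⟩ := exists_subset_card_eq hst.le
    replace hs := hs.mono_right hs's
    have e : Fin t ≃ s' := (Fintype.equivFinOfCardEq (by simpa using hs')).symm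
    obtain ⟨A, hA⟩ := hVC (fun i => z (e i)) (by
      intro i j hij
      by_contra hne
      obtain ⟨u, hu, hu'⟩ := hs.exists_inter_eq_singleton (e i).2
      obtain ⟨b, -, rfl⟩ := mem_image.1 hu
      have h1 : (e i : α) ∈ s' ∩ ({a | z a ∈ B b} : Finset α) := by rw [hu']; simp
      have h2 : (e j : α) ∈ s' ∩ ({a | z a ∈ B b} : Finset α) := by
        simp only [mem_inter, mem_filter, mem_univ, true_and] at h1 ⊢
        exact ⟨(e j).2, (show z (e i) = z (e j) from hij) ▸ h1.2⟩
      rw [hu', mem_singleton] at h2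
      exact hne (e.injective (Subtype.ext h2.symm)))
    obtain ⟨u, hu, hu'⟩ := hs (t := A.image fun i => (e i : α)) (by
      intro a ha
      obtain ⟨i, -, rfl⟩ := mem_image.1 ha
      exact (e i).2)
    obtain ⟨b, -, rfl⟩ := mem_image.1 hu
    obtain ⟨i, hi⟩ := hA b
    refine hi ?_
    have := congrArg ((e i : α) ∈ ·) hu'
    simp only [mem_inter, mem_filter, mem_univ, true_and, mem_image, (e i).2, eq_iff_iff] at this
    rw [this]
    constructor
    · rintro ⟨j, hj, hij⟩
      rwa [← e.injective (Subtype.ext hij)]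
    · exact fun h => ⟨i, h, rfl⟩
  refine (card_le_card_shatterer F).trans (card_shatterer_le_sum_vcDim.trans ?_)
  calc ∑ k ∈ Iic F.vcDim, (Fintype.card α).choose k
      ≤ ∑ k ∈ range (t + 1), (Fintype.card α).choose k :=
        sum_le_sum_of_subset fun k hk => by simp at hk ⊢; omega
    _ ≤ ∑ k ∈ range (t + 1), Fintype.card α ^ k * 1 ^ (t - k) * t.choose k := by
        refine sum_le_sum fun k hk => ?_
        rw [one_pow, mul_one]
        exact (Nat.choose_le_pow _ _).trans
          (Nat.le_mul_of_pos_right _ (Nat.choose_pos (by simp at hk; omega)))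
    _ = _ := (add_pow _ _ _).symm

open Finset Classical in
/-- If a random swap of the two halves of a double sample is required to avoid `A` in the first
half while the second half keeps many points of `A`, then many coordinates are forced. -/
theorem card_swaps_le {m : ℕ} (g : ℕ) (A : Finset (Fin m × Bool)) :
    #{σ : Fin m → Bool | (∀ i, (i, σ i) ∉ A) ∧ g ≤ #{i | (i, !σ i) ∈ A}} * 2 ^ g ≤ 2 ^ m := by
  set S : Finset (Fin m → Bool) :=
    {σ | (∀ i, (i, σ i) ∉ A) ∧ g ≤ #{i | (i, !σ i) ∈ A}} with hS
  obtain h | ⟨σ₀, hσ₀⟩ := S.eq_empty_or_nonempty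
  · simp [h]
  simp only [hS, mem_filter, mem_univ, true_and] at hσ₀
  set J : Finset (Fin m) := {i | (i, !σ₀ i) ∈ A} with hJ
  have hsub : S ⊆ Fintype.piFinset fun i => if i ∈ J then {σ₀ i} else (univ : Finset Bool) := by
    intro σ hσ
    simp only [hS, mem_filter, mem_univ, true_and] at hσ
    rw [Fintype.mem_piFinset]
    intro i
    split_ifs with hi
    · rw [mem_singleton]
      by_contra hne
      have : σ i = !σ₀ i := by cases h1 : σ i <;> cases h2 : σ₀ i <;> simp_all
      simp only [hJ, mem_filter, mem_univ, true_and] at hi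
      exact hσ.1 i (this ▸ hi)
    · simp
  have hcard : #(Fintype.piFinset fun i => if i ∈ J then {σ₀ i} else (univ : Finset Bool)) =
      2 ^ (m - #J) := by
    rw [Fintype.card_piFinset]
    have : ∀ i, #(if i ∈ J then {σ₀ i} else (univ : Finset Bool)) =
        if i ∈ J then 1 else 2 := by intro i; split_ifs <;> simp
    simp_rw [this]
    rw [prod_ite]
    simp only [prod_const_one, prod_const, one_mul]
    congr 1
    rw [filter_not, card_sdiff_of_subset (filter_subset _ _)]
    simp
  have hJm : #J ≤ m := by simpa using card_le_univ J
  calc #S * 2 ^ g ≤ 2 ^ (m - #J) * 2 ^ g :=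
        Nat.mul_le_mul_right _ ((card_le_card hsub).trans_eq hcard)
    _ ≤ 2 ^ (m - #J) * 2 ^ #J := Nat.mul_le_mul_left _ (Nat.pow_le_pow_right (by norm_num) hσ₀.2)
    _ = 2 ^ m := by rw [← pow_add]; congr 1; omega

open Finset Classical in
theorem sum_prod_mul_card_hits {V : Type*} [Fintype V] (μ : V → ℝ) (hμ : ∑ v, μ v = 1)
    (B : Finset V) (m : ℕ) :
    ∑ y : Fin m → V, (∏ i, μ (y i)) * (#{i | y i ∈ B} : ℝ) = m * ∑ v ∈ B, μ v := by
  have key (i : Fin m) : ∑ y : Fin m → V, (∏ j, μ (y j)) * (if y i ∈ B then 1 else 0) =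
      ∑ v ∈ B, μ v := by
    have h := Finset.prod_univ_sum (fun _ : Fin m => (univ : Finset V))
      (fun j v => μ v * if j = i then (if v ∈ B then 1 else 0) else 1)
    rw [Fintype.piFinset_univ] at h
    calc _ = ∑ y : Fin m → V, ∏ j, μ (y j) * (if j = i then (if y j ∈ B then 1 else 0) else 1) := by
          refine sum_congr rfl fun y _ => ?_
          rw [prod_mul_distrib]
          congr 1
          rw [prod_ite_eq']
          simp
      _ = _ := h.symm
      _ = ∏ j : Fin m, if j = i then ∑ v ∈ B, μ v else 1 := by
          refine prod_congr rfl fun j _ => ?_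
          split_ifs <;> simp [hμ]
      _ = _ := by rw [prod_ite_eq']; simp
  calc _ = ∑ y : Fin m → V, ∑ i, (∏ j, μ (y j)) * (if y i ∈ B then 1 else 0) := by
        refine sum_congr rfl fun y _ => ?_
        rw [← mul_sum, sum_boole]
    _ = _ := by rw [sum_comm, sum_congr rfl fun i _ => key i]; simp

open Finset Classical in
/-- A reverse Markov inequality for the number of hits of an independent sample. -/
theorem one_le_mul_sum_prod_hits {V : Type*} [Fintype V] (μ : V → ℝ) (hμ0 : ∀ v, 0 ≤ μ v)
    (hμ : ∑ v, μ v = 1) (B : Finset V) {T g : ℕ} (hg : 0 < g) (hB : 1 ≤ T * ∑ v ∈ B, μ v)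
    {m : ℕ} (hm : m = 2 * T * g) :
    1 ≤ 2 * T * ∑ y : Fin m → V,
      if g ≤ #{i | y i ∈ B} then ∏ i, μ (y i) else 0 := by
  subst hm
  have h := sum_prod_mul_card_hits μ hμ B (2 * T * g)
  have hP (y : Fin (2 * T * g) → V) : 0 ≤ ∏ i, μ (y i) := prod_nonneg fun i _ => hμ0 _
  have h1 : ∑ y : Fin (2 * T * g) → V, ∏ i, μ (y i) = 1 := by
    rw [← Fintype.sum_pow, hμ, one_pow]
  have hle : ∑ y : Fin (2 * T * g) → V, (∏ i, μ (y i)) * (#{i | y i ∈ B} : ℝ) ≤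
      ∑ y : Fin (2 * T * g) → V, (g * (∏ i, μ (y i)) +
        (2 * T * g) * if g ≤ #{i | y i ∈ B} then ∏ i, μ (y i) else 0) := by
    refine sum_le_sum fun y _ => ?_
    split_ifs with hy
    · have : (#{i | y i ∈ B} : ℝ) ≤ 2 * T * g := by
        have := card_le_univ ({i | y i ∈ B} : Finset (Fin (2 * T * g)))
        rw [Fintype.card_fin] at this
        exact_mod_cast this
      have h2 : (0 : ℝ) ≤ g * ∏ i, μ (y i) := mul_nonneg (by positivity) (hP y)
      nlinarith [mul_le_mul_of_nonneg_left this (hP y)]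
    · have : (#{i | y i ∈ B} : ℝ) ≤ g := by exact_mod_cast (not_le.1 hy).le
      nlinarith [mul_le_mul_of_nonneg_left this (hP y)]
  rw [h, sum_add_distrib, ← mul_sum, ← mul_sum, h1] at hle
  push_cast at hle
  have hg' : (0 : ℝ) < g := by exact_mod_cast hg
  refine le_of_mul_le_mul_left (a := (g : ℝ)) ?_ hg'
  nlinarith

open Finset Classical in
/-- The `ε`-net theorem, with `ε = 1 / T`. -/
theorem exists_transversal_of_weights {V β : Type*} [Fintype V] [Fintype β] (B : β → Finset V)
    {t T g : ℕ} (hg : 2 * T * (4 * T * g + 1) ^ t < 2 ^ g)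
    (hVC : ∀ x : Fin t → V, Function.Injective x →
      ∃ A : Finset (Fin t), ∀ b, ∃ i, ¬ (x i ∈ B b ↔ i ∈ A))
    (μ : V → ℝ) (hμ0 : ∀ v, 0 ≤ μ v) (hμ : ∑ v, μ v = 1) (hB : ∀ b, 1 ≤ T * ∑ v ∈ B b, μ v) :
    ∃ x : Fin (2 * T * g) → V, ∀ b, ∃ i, x i ∈ B b := by
  obtain ⟨m, hm⟩ : ∃ m, m = 2 * T * g := ⟨_, rfl⟩
  rw [← hm]
  by_contra! hcon
  choose b hb using hcon
  obtain rfl | hg0 := Nat.eq_zero_or_pos g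
  · obtain rfl : T = 0 := by
      by_contra h
      simp at hg
      omega
    have := hB (b fun i => (Fin.cast (by simpa using hm) i : Fin 0).elim0)
    norm_num at this
  set Q : (Fin m × Bool → V) → Prop := fun z =>
    ∃ b, (∀ i, z (i, false) ∉ B b) ∧ g ≤ #{i | z (i, true) ∈ B b} with hQ
  set P : (Fin m × Bool → V) → ℝ := fun z => ∏ a, μ (z a) with hPdef
  have hP (z) : 0 ≤ P z := prod_nonneg fun i _ => hμ0 _
  let e : (Fin m × Bool → V) ≃ (Fin m → V) × (Fin m → V) :=
    { toFun := fun z => (fun i => z (i, false), fun i => z (i, true))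
      invFun := fun p a => if a.2 then p.2 a.1 else p.1 a.1
      left_inv := fun z => by ext ⟨i, _ | _⟩ <;> simp
      right_inv := fun p => by simp }
  have hlow : 1 ≤ 2 * T * ∑ z, if Q z then P z else 0 := by
    have h1 : ∑ x : Fin m → V, ∏ i, μ (x i) = 1 := by
      rw [← Fintype.sum_pow, hμ, one_pow]
    calc (1 : ℝ) = ∑ x : Fin m → V, (∏ i, μ (x i)) * 1 := by simp [h1]
      _ ≤ ∑ x : Fin m → V, (∏ i, μ (x i)) * (2 * T * ∑ y : Fin m → V,
            if g ≤ #{i | y i ∈ B (b x)} then ∏ i, μ (y i) else 0) :=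
          sum_le_sum fun x _ => mul_le_mul_of_nonneg_left
            (one_le_mul_sum_prod_hits μ hμ0 hμ _ hg0 (hB _) hm) (prod_nonneg fun i _ => hμ0 _)
      _ = 2 * T * ∑ p : (Fin m → V) × (Fin m → V), (∏ i, μ (p.1 i)) *
            (if g ≤ #{i | p.2 i ∈ B (b p.1)} then ∏ i, μ (p.2 i) else 0) := by
          rw [Fintype.sum_prod_type, mul_sum]
          refine sum_congr rfl fun x _ => ?_
          simp only [← mul_sum]
          ring
      _ = 2 * T * ∑ z : Fin m × Bool → V, (∏ i, μ ((e z).1 i)) *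
            (if g ≤ #{i | (e z).2 i ∈ B (b (e z).1)} then ∏ i, μ ((e z).2 i) else 0) := by
          rw [e.sum_comp (fun p => (∏ i, μ (p.1 i)) *
            (if g ≤ #{i | p.2 i ∈ B (b p.1)} then ∏ i, μ (p.2 i) else 0))]
      _ ≤ _ := by
          refine mul_le_mul_of_nonneg_left (sum_le_sum fun z _ => ?_) (by positivity)
          have hPz : P z = (∏ i, μ ((e z).1 i)) * ∏ i, μ ((e z).2 i) := by
            simp only [hPdef, Fintype.prod_prod_type, Fintype.prod_bool, prod_mul_distrib, e,
              Equiv.coe_fn_mk]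
            ring
          by_cases h : g ≤ #{i | (e z).2 i ∈ B (b (e z).1)}
          · rw [if_pos h, if_pos ⟨b (e z).1, fun i => hb (e z).1 i, h⟩, hPz]
          · rw [if_neg h, mul_zero]
            split_ifs
            exacts [hP z, le_rfl]
  let s (σ : Fin m → Bool) : Fin m × Bool ≃ Fin m × Bool :=
    { toFun := fun a => (a.1, xor a.2 (σ a.1))
      invFun := fun a => (a.1, xor a.2 (σ a.1))
      left_inv := fun a => by simp
      right_inv := fun a => by simp }
  have hswap (σ) : ∑ z, (if Q z then P z else 0) = ∑ z, if Q (z ∘ s σ) then P z else 0 := by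
    rw [← ((s σ).arrowCongr (Equiv.refl V)).symm.sum_comp]
    refine sum_congr rfl fun z _ => ?_
    have h1 : ((s σ).arrowCongr (Equiv.refl V)).symm z = z ∘ s σ := by
      ext; simp [Equiv.arrowCongr]
    rw [h1]
    have h2 : P (z ∘ s σ) = P z := (s σ).prod_comp fun a => μ (z a)
    rw [h2]
  have hcount (z) : #{σ | Q (z ∘ s σ)} * 2 ^ g ≤ (4 * T * g + 1) ^ t * 2 ^ m := by
    set F := univ.image fun b => ({a | z a ∈ B b} : Finset (Fin m × Bool)) with hF
    have hF1 : #F ≤ (4 * T * g + 1) ^ t := by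
      refine le_trans (le_of_eq ?_) ((card_traces_le B t hVC z).trans_eq ?_)
      · rw [hF]
        congr!
      congr 2
      simp [hm]
      ring
    have hsub : ({σ | Q (z ∘ s σ)} : Finset (Fin m → Bool)) ⊆ F.biUnion fun A =>
        {σ | (∀ i, (i, σ i) ∉ A) ∧ g ≤ #{i | (i, !σ i) ∈ A}} := by
      intro σ hσ
      simp only [mem_filter, mem_univ, true_and, hQ] at hσ
      obtain ⟨b, hb1, hb2⟩ := hσ
      refine mem_biUnion.2 ⟨_, mem_image_of_mem _ (mem_univ b), ?_⟩
      simp only [mem_filter, mem_univ, true_and]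
      refine ⟨fun i => ?_, ?_⟩
      · simpa [s] using hb1 i
      · simpa [s] using hb2
    calc _ ≤ (∑ A ∈ F, #{σ : Fin m → Bool | (∀ i, (i, σ i) ∉ A) ∧
            g ≤ #{i | (i, !σ i) ∈ A}}) * 2 ^ g :=
          Nat.mul_le_mul_right _ ((card_le_card hsub).trans card_biUnion_le)
      _ ≤ ∑ A ∈ F, 2 ^ m := by
          rw [sum_mul]
          exact sum_le_sum fun A _ => card_swaps_le g A
      _ = #F * 2 ^ m := by simp
      _ ≤ _ := Nat.mul_le_mul_right _ hF1
  have hPsum : ∑ z, P z = 1 := by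
    have h := Finset.prod_univ_sum (fun _ : Fin m × Bool => (univ : Finset V)) (fun _ v => μ v)
    rw [Fintype.piFinset_univ] at h
    rw [← h]
    simp [hμ]
  have hup : 2 ^ m * (∑ z, if Q z then P z else 0) * 2 ^ g ≤
      ((4 * T * g + 1) ^ t * 2 ^ m : ℝ) := by
    calc _ = (∑ σ : Fin m → Bool, ∑ z, if Q (z ∘ s σ) then P z else 0) * 2 ^ g := by
          rw [← sum_congr rfl fun σ _ => hswap σ]
          simp
      _ = ∑ z, P z * ((#{σ | Q (z ∘ s σ)} * 2 ^ g : ℕ) : ℝ) := by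
          rw [sum_comm, sum_mul]
          refine sum_congr rfl fun z _ => ?_
          rw [← sum_filter, sum_const]
          push_cast
          simp only [nsmul_eq_mul]
          ring
      _ ≤ ∑ z, P z * (((4 * T * g + 1) ^ t * 2 ^ m : ℕ) : ℝ) :=
          sum_le_sum fun z _ => mul_le_mul_of_nonneg_left (by exact_mod_cast hcount z) (hP z)
      _ = _ := by rw [← sum_mul, hPsum]; push_cast; ring
  have hg' : (2 * T * (4 * T * g + 1) ^ t : ℝ) < 2 ^ g := by exact_mod_cast hg
  have h2m : (0 : ℝ) < 2 ^ m := by positivity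
  set q := ∑ z, if Q z then P z else 0
  have h3 : q * 2 ^ g ≤ ((4 * T * g + 1) ^ t : ℝ) := by
    refine le_of_mul_le_mul_left (a := (2 : ℝ) ^ m) ?_ h2m
    nlinarith
  have h4 : 2 * T * (q * 2 ^ g) ≤ (2 * T * (4 * T * g + 1) ^ t : ℝ) :=
    mul_le_mul_of_nonneg_left h3 (by positivity)
  have h5 : (2 : ℝ) ^ g ≤ 2 * T * q * 2 ^ g := le_mul_of_one_le_left (by positivity) hlow
  linarith

open Finset Classical in
/-- The probability that an independent random set contains `A` and avoids `K`. -/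
theorem sum_prod_of_subset_of_disjoint {ι : Type*} [Fintype ι] (q : ι → ℝ) {A K : Finset ι}
    (h : Disjoint A K) :
    ∑ S : Finset ι, (if A ⊆ S ∧ Disjoint K S then
      (∏ i ∈ S, q i) * ∏ i ∈ univ \ S, (1 - q i) else 0) =
    (∏ i ∈ A, q i) * ∏ i ∈ K, (1 - q i) := by
  have h1 := prod_add (fun i => if i ∈ K then 0 else q i)
    (fun i => if i ∈ A then 0 else 1 - q i) (univ : Finset ι)
  rw [powerset_univ] at h1
  have h2 : ∏ i : ι, ((if i ∈ K then 0 else q i) + (if i ∈ A then 0 else 1 - q i)) =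
      (∏ i ∈ A, q i) * ∏ i ∈ K, (1 - q i) := by
    rw [← Fintype.prod_ite_mem A q, ← Fintype.prod_ite_mem K, ← prod_mul_distrib]
    refine prod_congr rfl fun i _ => ?_
    by_cases hA : i ∈ A
    · simp [hA, Finset.disjoint_left.1 h hA]
    · by_cases hK : i ∈ K <;> simp [hA, hK]
  rw [← h2, h1]
  refine sum_congr rfl fun S _ => ?_
  split_ifs with hS
  · congr 1
    · refine prod_congr rfl fun i hi => ?_
      rw [if_neg (Finset.disjoint_right.1 hS.2 hi)]
    · refine prod_congr rfl fun i hi => ?_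
      rw [if_neg fun hA => (mem_sdiff.1 hi).2 (hS.1 hA)]
  · rw [not_and_or] at hS
    symm
    obtain hS | hS := hS
    · obtain ⟨a, ha, haS⟩ := Finset.not_subset.1 hS
      rw [prod_eq_zero (i := a) (s := univ \ S) (by simpa using haS) (by simp [ha]), mul_zero]
    · obtain ⟨a, ha, haS⟩ := Finset.not_disjoint_iff.1 hS
      rw [prod_eq_zero (i := a) (s := S) haS (by simp [ha]), zero_mul]

theorem one_sub_sum_le_prod_one_sub {ι : Type*} (s : Finset ι) (q : ι → ℝ)
    (h0 : ∀ i, 0 ≤ q i) (h1 : ∀ i, q i ≤ 1) : 1 - ∑ i ∈ s, q i ≤ ∏ i ∈ s, (1 - q i) := by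
  classical
  induction s using Finset.induction_on with
  | empty => simp
  | insert a s ha ih =>
    rw [Finset.sum_insert ha, Finset.prod_insert ha]
    have : 0 ≤ ∑ i ∈ s, q i := Finset.sum_nonneg fun i _ => h0 i
    nlinarith [h0 a, h1 a, mul_le_mul_of_nonneg_left ih (sub_nonneg.2 (h1 a)),
      mul_nonneg (h0 a) this]

open Finset Classical in
/-- A Clarkson–Shor type sampling bound: if every subset `S` carries at most `c * #S` related pairs
whose conflict set avoids `S`, then the total weight of related pairs is linear. -/
theorem sum_related_le_of_sampling {ι : Type*} [Fintype ι] (R : ι → ι → Prop)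
    (hR : ∀ i, ¬ R i i) (K : ι → ι → Finset ι) (hKl : ∀ i j, i ∉ K i j) (hKr : ∀ i j, j ∉ K i j)
    (c : ℝ) (hc : ∀ S : Finset ι, (#{p : ι × ι | R p.1 p.2 ∧
      ({p.1, p.2} ⊆ S ∧ Disjoint (K p.1 p.2) S)} : ℝ) ≤ c * #S)
    (w : ι → ℝ) (hw0 : ∀ i, 0 ≤ w i) (hw1 : ∀ i, w i ≤ 1)
    (hK : ∀ i j, R i j → ∑ k ∈ K i j, w k ≤ 1) :
    ∑ p : ι × ι with R p.1 p.2, w p.1 * w p.2 ≤ 4 * c * ∑ i, w i := by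
  set q : ι → ℝ := fun i => w i / 2 with hq
  have hq0 (i) : 0 ≤ q i := by have := hw0 i; simp only [hq]; linarith
  have hq1 (i) : q i ≤ 1 := by have := hw1 i; simp only [hq]; linarith
  set P : Finset ι → ℝ := fun S => (∏ i ∈ S, q i) * ∏ i ∈ univ \ S, (1 - q i) with hP
  have hP0 (S) : 0 ≤ P S :=
    mul_nonneg (prod_nonneg fun i _ => hq0 i) (prod_nonneg fun i _ => sub_nonneg.2 (hq1 i))
  have hlow : (∑ p : ι × ι with R p.1 p.2, w p.1 * w p.2) / 8 ≤
      ∑ S, P S * (#{p : ι × ι | R p.1 p.2 ∧ ({p.1, p.2} ⊆ S ∧ Disjoint (K p.1 p.2) S)} : ℝ) := by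
    calc _ = ∑ p : ι × ι with R p.1 p.2, w p.1 * w p.2 / 8 := sum_div _ _ _
      _ ≤ ∑ p : ι × ι with R p.1 p.2, ∑ S, if {p.1, p.2} ⊆ S ∧ Disjoint (K p.1 p.2) S
            then P S else 0 := by
          refine sum_le_sum fun p hp => ?_
          have hp' : R p.1 p.2 := (mem_filter.1 hp).2
          have hne : p.1 ≠ p.2 := fun h => hR p.1 (by rw [← h] at hp'; exact hp')
          rw [sum_prod_of_subset_of_disjoint q (by
            rw [Finset.disjoint_left]
            intro a ha
            simp only [mem_insert, mem_singleton] at ha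
            obtain rfl | rfl := ha
            exacts [hKl _ _, hKr _ _]), prod_pair hne]
          have h1 := one_sub_sum_le_prod_one_sub (K p.1 p.2) q hq0 hq1
          have h2 : ∑ k ∈ K p.1 p.2, q k ≤ 1 / 2 := by
            simp only [hq]
            rw [← sum_div]
            have := hK _ _ hp'
            linarith
          have h3 : (1 / 2 : ℝ) ≤ ∏ i ∈ K p.1 p.2, (1 - q i) := by linarith
          have h4 := mul_le_mul_of_nonneg_left h3 (mul_nonneg (hq0 p.1) (hq0 p.2))
          refine le_trans (le_of_eq ?_) h4
          simp only [hq]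
          ring
      _ = _ := by
          rw [sum_comm]
          refine sum_congr rfl fun S _ => ?_
          rw [← sum_filter, filter_filter, sum_const, nsmul_eq_mul, mul_comm]
  have hsize : ∑ S, P S * (#S : ℝ) = ∑ i, q i := by
    calc _ = ∑ S, ∑ i, if {i} ⊆ S ∧ Disjoint (∅ : Finset ι) S then P S else 0 := by
          refine sum_congr rfl fun S _ => ?_
          rw [← sum_filter, sum_const, nsmul_eq_mul, mul_comm]
          congr
          ext
          simp
      _ = _ := by
          rw [sum_comm]
          refine sum_congr rfl fun i _ => ?_
          rw [sum_prod_of_subset_of_disjoint q (disjoint_empty_right _)]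
          simp
  have hup : ∑ S, P S * (#{p : ι × ι | R p.1 p.2 ∧ ({p.1, p.2} ⊆ S ∧
      Disjoint (K p.1 p.2) S)} : ℝ) ≤ c * ∑ i, q i := by
    rw [← hsize, mul_sum]
    refine sum_le_sum fun S _ => ?_
    have := mul_le_mul_of_nonneg_left (hc S) (hP0 S)
    linarith
  have hqs : ∑ i, q i = (∑ i, w i) / 2 := (sum_div _ _ _).symm
  rw [hqs] at hup
  linarith

open Finset Classical in
/-- Greedy selection of an independent set of large size from a sparse weighted relation. -/
theorem exists_independent_of_sparse {ι : Type*} (R : ι → ι → Prop)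
    (hRsymm : ∀ i j, R i j → R j i) (w : ι → ℝ) (hw0 : ∀ i, 0 ≤ w i)
    (hw1 : ∀ i, w i ≤ 1) (C : ℝ)
    (hC : ∀ M : Finset ι, ∑ i ∈ M, w i * ∑ j ∈ M with R i j, w j ≤ C * ∑ i ∈ M, w i)
    (M : Finset ι) :
    ∃ I ⊆ M, (∀ i ∈ I, ∀ j ∈ I, i ≠ j → ¬ R i j) ∧ ∑ i ∈ M, w i ≤ (C + 1) * #I := by
  induction M using Finset.strongInduction with
  | H M ih =>
    obtain h0 | hpos := le_or_gt (∑ i ∈ M, w i) 0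
    · exact ⟨∅, by simp, by simp, by simpa using h0⟩
    obtain ⟨i, hi, hiC⟩ : ∃ i ∈ M, ∑ j ∈ M with R i j, w j ≤ C := by
      by_contra! hcon
      obtain ⟨i, hi, hi0⟩ := exists_lt_of_sum_lt (s := M) (f := fun _ => (0 : ℝ)) (g := w)
        (by simpa using hpos)
      refine absurd (hC M) (not_le.2 ?_)
      rw [mul_sum]
      refine sum_lt_sum (fun j hj => ?_) ⟨i, hi, ?_⟩
      · rw [mul_comm]
        exact mul_le_mul_of_nonneg_left (hcon j hj).le (hw0 j)
      · rw [mul_comm]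
        exact mul_lt_mul_of_pos_left (hcon i hi) hi0
    set M' := M.filter fun j => j ≠ i ∧ ¬ R i j with hM'
    obtain ⟨I, hIM, hI, hsum⟩ := ih M' ⟨filter_subset _ _, fun h => by simpa [hM'] using h hi⟩
    have hiI : i ∉ I := fun h => by simpa [hM'] using hIM h
    refine ⟨insert i I, ?_, ?_, ?_⟩
    · exact insert_subset hi (hIM.trans (filter_subset _ _))
    · have hiR (j) (hj : j ∈ I) : ¬ R i j := (mem_filter.1 (hIM hj)).2.2
      intro a ha b hb hab
      obtain ha' | ha' := mem_insert.1 ha <;> obtain hb' | hb' := mem_insert.1 hb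
      · exact absurd (ha'.trans hb'.symm) hab
      · exact ha' ▸ hiR b hb'
      · exact fun h => hiR a ha' (hRsymm _ _ (hb' ▸ h))
      · exact hI a ha' b hb' hab
    · have hsplit : ∑ j ∈ M, w j ≤ ∑ j ∈ M', w j + ∑ j ∈ M with R i j, w j + w i := by
        have hsub : M ⊆ (M' ∪ M.filter fun j => R i j) ∪ {i} := by
          intro j hj
          simp only [hM', mem_union, mem_filter, mem_singleton, hj, true_and]
          tauto
        have h1 := sum_le_sum_of_subset_of_nonneg hsub fun j _ _ => hw0 j
        have h2 := sum_union_inter (s₁ := M' ∪ M.filter fun j => R i j) (s₂ := {i}) (f := w)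
        have h3 := sum_union_inter (s₁ := M') (s₂ := M.filter fun j => R i j) (f := w)
        have h4 : 0 ≤ ∑ j ∈ (M' ∪ M.filter fun j => R i j) ∩ {i}, w j :=
          sum_nonneg fun j _ => hw0 j
        have h5 : 0 ≤ ∑ j ∈ M' ∩ M.filter fun j => R i j, w j :=
          sum_nonneg fun j _ => hw0 j
        rw [sum_singleton] at h2
        linarith
      rw [card_insert_of_notMem hiI]
      push_cast
      have := hw1 i
      linarith

open Finset Classical in
/-- Fractional packings of balls are at most a constant times larger than integral ones, when
ball-crossing graphs are sparse. -/
theorem exists_packing_of_fractional {V : Type*} [Fintype V] (G : SimpleGraph V) {ι : Type}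
    [Fintype ι] (p : ι → V) (r : ι → ℕ)
    (anti : ∀ i j, i ≠ j → ¬ G.gBall (p i) (r i) ⊆ G.gBall (p j) (r j)) (k : ℕ)
    (hk : ∀ (S : Finset ι) (H : SimpleGraph S), GraphMinor H G → H.adjPairs ≤ 2 * k * #S)
    (w : ι → ℝ) (hw0 : ∀ i, 0 ≤ w i)
    (hw : ∀ x, ∑ i with x ∈ G.gBall (p i) (r i), w i ≤ 1) :
    ∃ I : Finset ι, (∀ i ∈ I, ∀ j ∈ I, i ≠ j →
      Disjoint (G.gBall (p i) (r i)) (G.gBall (p j) (r j))) ∧ ∑ i, w i ≤ (8 * k + 1) * #I := by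
  have hw1 (i) : w i ≤ 1 := by
    refine le_trans ?_ (hw (p i))
    exact single_le_sum (f := w) (fun j _ => hw0 j)
      (mem_filter.2 ⟨mem_univ i, .rfl, by simp⟩)
  obtain ⟨R, hR⟩ : ∃ R : ι → ι → Prop, ∀ i j, R i j ↔
      i ≠ j ∧ ¬ Disjoint (G.gBall (p i) (r i)) (G.gBall (p j) (r j)) :=
    ⟨_, fun _ _ => Iff.rfl⟩
  have hx : ∀ i j, ∃ x, R i j → x ∈ G.gBall (p i) (r i) ∧ x ∈ G.gBall (p j) (r j) := by
    intro i j
    by_cases h : R i j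
    · obtain ⟨x, hx⟩ := Set.not_disjoint_iff.1 ((hR i j).1 h).2
      exact ⟨x, fun _ => hx⟩
    · exact ⟨p i, fun h' => absurd h' h⟩
  choose x hx using hx
  set K : ι → ι → Finset ι := fun i j => {k | k ≠ i ∧ k ≠ j ∧ x i j ∈ G.gBall (p k) (r k)} with hK
  have hsum : ∀ w' : ι → ℝ, (∀ i, 0 ≤ w' i) → (∀ i, w' i ≤ w i) →
      ∑ p : ι × ι with R p.1 p.2, w' p.1 * w' p.2 ≤ 4 * (2 * k) * ∑ i, w' i := by
    intro w' hw'0 hw'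
    refine sum_related_le_of_sampling R (fun i h => ((hR i i).1 h).1 rfl) K (by simp [hK])
      (by simp [hK])
      (2 * k) (fun S => ?_) w' hw'0 (fun i => (hw' i).trans (hw1 i)) (fun i j _ => ?_)
    · let r' : S → S → Prop := fun a b => R a b ∧ Disjoint (K a b) S
      have h1 := hk S (SimpleGraph.fromRel r') (by
        have h2 : GraphMinor (SimpleGraph.fromRel r') G := by
          refine G.graphMinor_of_balls _ (fun a : S => p a) (fun a : S => r a)
            (fun a b hab => anti a b fun h => hab (Subtype.ext h)) fun a b hab => ?_
          rw [SimpleGraph.fromRel_adj] at hab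
          obtain ⟨hab, h | h⟩ := hab
          · refine ⟨x a b, (hx _ _ h.1).1, (hx _ _ h.1).2, fun c hca hcb hc => ?_⟩
            refine Finset.disjoint_right.1 h.2 c.2 ?_
            simp only [hK, mem_filter, mem_univ, true_and]
            exact ⟨fun h => hca (Subtype.ext h), fun h => hcb (Subtype.ext h), hc⟩
          · refine ⟨x b a, (hx _ _ h.1).2, (hx _ _ h.1).1, fun c hca hcb hc => ?_⟩
            refine Finset.disjoint_right.1 h.2 c.2 ?_
            simp only [hK, mem_filter, mem_univ, true_and]
            exact ⟨fun h => hcb (Subtype.ext h), fun h => hca (Subtype.ext h), hc⟩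
        exact h2)
      have h3 : #{p : ι × ι | R p.1 p.2 ∧ ({p.1, p.2} ⊆ S ∧ Disjoint (K p.1 p.2) S)} ≤
          (SimpleGraph.fromRel r').adjPairs := by
        unfold SimpleGraph.adjPairs
        refine card_le_card_of_surjOn (fun p => (p.1.1, p.2.1)) ?_
        rintro ⟨i, j⟩ hij
        simp only [coe_filter, mem_univ, true_and, Set.mem_ofPred_eq, insert_subset_iff,
          singleton_subset_iff] at hij
        refine ⟨(⟨i, hij.2.1.1⟩, ⟨j, hij.2.1.2⟩), ?_, rfl⟩
        simp only [coe_filter, mem_univ, true_and, Set.mem_ofPred_eq, SimpleGraph.fromRel_adj]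
        exact ⟨fun h => ((hR i j).1 hij.1).1 (congrArg Subtype.val h), .inl ⟨hij.1, hij.2.2⟩⟩
      exact_mod_cast h3.trans h1
    · refine le_trans ?_ (hw (x i j))
      refine (sum_le_sum fun k _ => hw' k).trans
        (sum_le_sum_of_subset_of_nonneg (fun k hk => ?_) fun k _ _ => hw0 k)
      simp only [hK, mem_filter, mem_univ, true_and] at hk ⊢
      exact hk.2.2
  obtain ⟨I, -, hI, hIw⟩ := exists_independent_of_sparse R
    (fun i j h => (hR j i).2 ⟨((hR i j).1 h).1.symm, fun h' => ((hR i j).1 h).2 h'.symm⟩)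
    w hw0 hw1 (4 * (2 * k)) (fun M => by
      have h := hsum (fun i => if i ∈ M then w i else 0)
        (fun i => by split_ifs; exacts [hw0 i, le_rfl])
        (fun i => by split_ifs; exacts [le_rfl, hw0 i])
      rw [sum_filter, Fintype.sum_prod_type] at h
      simp only [sum_ite_mem, univ_inter] at h
      refine le_trans (le_of_eq ?_) h
      rw [← Fintype.sum_ite_mem M]
      refine sum_congr rfl fun i _ => ?_
      by_cases hi : i ∈ M
      · simp only [hi, if_true]
        rw [← sum_filter]
        simp only [mul_ite, mul_zero]
        rw [← sum_filter, filter_filter, mul_sum]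
        refine sum_congr ?_ fun _ _ => rfl
        ext
        simp [and_comm]
      · simp [hi]) univ
  refine ⟨I, fun i hi j hj hij => ?_, ?_⟩
  · by_contra h
    exact hI i hi j hj hij ((hR i j).2 ⟨hij, h⟩)
  · linarith

open Finset Classical in
/-- Linear programming duality between fractional transversals and fractional packings. -/
theorem exists_weights_or_fractional_packing {V ι : Type*} [Fintype V] [Nonempty V] [Fintype ι]
    (B : ι → Finset V) {T : ℝ} (hT : 0 < T) :
    (∃ μ : V → ℝ, (∀ v, 0 ≤ μ v) ∧ ∑ v, μ v = 1 ∧ ∀ i, 1 ≤ T * ∑ v ∈ B i, μ v) ∨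
    ∃ w : ι → ℝ, (∀ i, 0 ≤ w i) ∧ (∀ x, ∑ i with x ∈ B i, w i ≤ 1) ∧ T < ∑ i, w i := by
  by_cases hμ : ∃ μ : V → ℝ, (∀ v, 0 ≤ μ v) ∧ ∑ v, μ v = 1 ∧ ∀ i, 1 ≤ T * ∑ v ∈ B i, μ v
  · exact .inl hμ
  right
  let L : (V → ℝ) →ₗ[ℝ] (ι → ℝ) :=
    { toFun := fun μ i => ∑ v ∈ B i, μ v
      map_add' := fun μ μ' => by ext; simp [sum_add_distrib]
      map_smul' := fun a μ => by ext; simp [mul_sum] }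
  obtain ⟨f, u, v, hfu, huv, hfv⟩ := geometric_hahn_banach_compact_closed
    (s := L '' stdSimplex ℝ V) (t := Set.Ici fun _ => T⁻¹)
    ((convex_stdSimplex ℝ V).linear_image L)
    ((isCompact_stdSimplex ℝ V).image L.continuous_of_finiteDimensional)
    (convex_Ici _) isClosed_Ici (by
      rw [Set.disjoint_left]
      rintro _ ⟨μ, hμ', rfl⟩ h
      refine hμ ⟨μ, hμ'.1, hμ'.2, fun i => ?_⟩
      have : T⁻¹ ≤ ∑ v ∈ B i, μ v := h i
      rwa [inv_le_iff_one_le_mul₀' hT] at this)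
  set c : ι → ℝ := fun i => f (Pi.single i 1) with hc
  have hf (y : ι → ℝ) : f y = ∑ i, y i * c i := by
    conv_lhs => rw [pi_eq_sum_univ' y]
    simp only [map_sum, map_smul, smul_eq_mul]
    refine sum_congr rfl fun i _ => ?_
    congr 2
  have hc0 (i) : 0 ≤ c i := by
    by_contra! hneg
    have hconst := hfv _ (Set.self_mem_Ici (a := fun _ : ι => T⁻¹))
    set s := (f (fun _ => T⁻¹) - v) / (-c i) with hs
    have hs0 : 0 ≤ s := div_nonneg (by linarith) (by linarith)
    have h := hfv ((fun _ => T⁻¹) + s • Pi.single i 1) (by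
      rw [Set.mem_Ici]
      refine le_add_of_nonneg_right (smul_nonneg hs0 ?_)
      rw [Pi.single_nonneg]
      exact zero_le_one)
    rw [map_add, map_smul, smul_eq_mul] at h
    have : s * c i = -(f (fun _ => T⁻¹) - v) := by
      rw [hs]
      have : c i ≠ 0 := hneg.ne
      field_simp
    have h' : f (Pi.single i 1) = c i := rfl
    rw [h'] at h
    linarith
  have hx (x : V) : ∑ i with x ∈ B i, c i < u := by
    have h := hfu _ ⟨Pi.single x 1, single_mem_stdSimplex ℝ x, rfl⟩
    rw [hf] at h
    refine lt_of_le_of_lt (le_of_eq ?_) h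
    rw [sum_filter]
    refine sum_congr rfl fun i _ => ?_
    simp [L, Pi.single_apply]
  have hu : 0 < u := (sum_nonneg fun i _ => hc0 i).trans_lt (hx (Classical.arbitrary V))
  refine ⟨fun i => c i / u, fun i => div_nonneg (hc0 i) hu.le, fun x => ?_, ?_⟩
  · rw [← sum_div, div_le_one hu]
    exact (hx x).le
  · rw [← sum_div, lt_div_iff₀ hu]
    have h := hfv _ (Set.self_mem_Ici (a := fun _ : ι => T⁻¹))
    rw [hf, ← mul_sum] at h
    have h2 := mul_lt_mul_of_pos_left (huv.trans h) hT
    rwa [← mul_assoc, mul_inv_cancel₀ hT.ne', one_mul] at h2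

theorem card_le_matchingNumber {V : Type*} [Fintype V] {E : Set (Set V)} (M : Finset (Set V))
    (hM : ↑M ⊆ E) (hd : (M : Set (Set V)).Pairwise Disjoint) : M.card ≤ matchingNumber E := by
  classical
  refine le_csSup ⟨Fintype.card (Set V), ?_⟩ ⟨M, hM, hd, rfl⟩
  rintro _ ⟨M', -, -, rfl⟩
  exact M'.card_le_univ

theorem transversalNumber_le_card {V : Type*} [Fintype V] {E : Set (Set V)} (T : Finset V)
    (hT : ∀ e ∈ E, ∃ v ∈ T, v ∈ e) : transversalNumber E ≤ T.card :=
  Nat.sInf_le ⟨T, hT, rfl⟩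

theorem SimpleGraph.exists_not_mem_iff_of_not_graphMinor {V : Type*} [Fintype V]
    (G : SimpleGraph V) {t : ℕ} (hG : ¬ GraphMinor (⊤ : SimpleGraph (Fin t)) G)
    (x : Fin t → V) (hx : Function.Injective x) :
    ∃ A : Finset (Fin t), ∀ c r, ∃ i, ¬ (x i ∈ G.gBall c r ↔ i ∈ A) := by
  by_contra! hcon
  refine hG (G.graphMinor_of_cut_pairs _ x hx fun i j _ => ?_)
  obtain ⟨c, r, h⟩ := hcon {i, j}
  exact ⟨c, r, (h i).2 (by simp), (h j).2 (by simp), fun k hi hj hk => by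
    simpa [hi, hj] using (h k).1 hk⟩

open Finset Classical in
/-- The transversal bound in terms of an edge density `k` forcing a complete minor. -/
theorem transversalNumber_le_of_sparse {V : Type} [Fintype V] (G : SimpleGraph V)
    {E : Set (Set V)} {t k g : ℕ} (hG : ¬ GraphMinor (⊤ : SimpleGraph (Fin t)) G)
    (hE : IsBallHypergraph G E) (hE0 : E.Nonempty)
    (hk : ∀ (U : Type) [Fintype U] (H : SimpleGraph U),
      ¬ GraphMinor (⊤ : SimpleGraph (Fin t)) H → H.adjPairs ≤ 2 * k * Fintype.card U)
    {T : ℕ} (hT0 : 0 < T) (hT : T = (8 * k + 1) * matchingNumber E)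
    (hg : 2 * T * (4 * T * g + 1) ^ t < 2 ^ g) :
    transversalNumber E ≤ 2 * T * g := by
  let ι := {e : Set V // Minimal (· ∈ E) e}
  choose p r hpr using fun e : ι => hE e.1 e.2.1
  have anti (i j : ι) (hij : i ≠ j) : ¬ G.gBall (p i) (r i) ⊆ G.gBall (p j) (r j) := by
    rw [← hpr, ← hpr]
    exact fun h => hij (Subtype.ext (h.antisymm (j.2.2 i.2.1 h)))
  have hV : Nonempty V := by
    obtain ⟨e, he⟩ := hE0
    obtain ⟨v, -⟩ := hE e he
    exact ⟨v⟩
  let B : ι → Finset V := fun i => {v | v ∈ i.1}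
  have hBm (i : ι) (v : V) : v ∈ B i ↔ v ∈ G.gBall (p i) (r i) := by
    rw [← hpr]
    simp [B]
  have hTpos : (0 : ℝ) < T := by exact_mod_cast hT0
  obtain ⟨μ, hμ0, hμ1, hμ⟩ | ⟨w, hw0, hw1, hw⟩ := exists_weights_or_fractional_packing B hTpos
  · obtain ⟨x, hx⟩ := exists_transversal_of_weights B hg (fun x hx => by
      obtain ⟨A, hA⟩ := G.exists_not_mem_iff_of_not_graphMinor hG x hx
      refine ⟨A, fun b => ?_⟩
      obtain ⟨i, hi⟩ := hA (p b) (r b)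
      exact ⟨i, by rwa [hBm]⟩) μ hμ0 hμ1 hμ
    refine (transversalNumber_le_card (univ.image x) fun e he => ?_).trans
      (card_image_le.trans_eq (by simp))
    obtain ⟨m, hme, hm⟩ := (Set.toFinite E).exists_le_minimal he
    obtain ⟨i, hi⟩ := hx ⟨m, hm⟩
    exact ⟨x i, by simp, hme (by simpa [B] using hi)⟩
  · exfalso
    obtain ⟨I, hI, hIw⟩ := exists_packing_of_fractional G p r anti k (fun S H hH => by
      have := hk S H fun h => hG (h.trans hH)
      rwa [Fintype.card_coe] at this) w hw0 (fun x => by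
        simpa only [hBm] using hw1 x)
    have hcard : #I ≤ matchingNumber E := by
      rw [← card_map (Function.Embedding.subtype _)]
      refine card_le_matchingNumber _ ?_ ?_
      · intro e he
        obtain ⟨i, -, rfl⟩ := mem_map.1 (mem_coe.1 he)
        exact i.2.1
      · intro e he e' he' hne
        obtain ⟨i, hi, rfl⟩ := mem_map.1 (mem_coe.1 he)
        obtain ⟨j, hj, rfl⟩ := mem_map.1 (mem_coe.1 he')
        have := hI i hi j hj fun h => hne (by rw [h])
        rwa [← hpr, ← hpr] at this
    have h1 : (8 * k + 1 : ℝ) * #I ≤ T := by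
      rw [hT]
      exact_mod_cast Nat.mul_le_mul_left _ hcard
    linarith

theorem adjPairs_le_of_not_graphMinor {t r : ℕ} (hr : 18 ≤ r) (ht0 : 0 < t)
    (ht : t ≤ 2 ^ (r ^ 2)) (U : Type) [Fintype U] (H : SimpleGraph U)
    (hH : ¬ GraphMinor (⊤ : SimpleGraph (Fin t)) H) :
    H.adjPairs ≤ 2 * (21300 * t * r) * Fintype.card U := by
  obtain h | h := isEmpty_or_nonempty U
  · simp [SimpleGraph.adjPairs]
  by_contra! hcon
  exact hH (graphMinor_top_of_adjPairs r t (21300 * t * r) hr ht (by nlinarith)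
    (by positivity) U H hcon.le)

theorem sample_size_bound {t ν r l : ℕ} (ht : 2 ≤ t) (hν : 1 ≤ ν) (hr : 1 ≤ r)
    (hrt : r ≤ 26 * t) (hl : 1 ≤ l) (hl2 : t * ν ≤ 2 ^ l) {T : ℕ}
    (hT : T = (8 * (21300 * t * r) + 1) * ν) :
    2 * T * (4 * T * (64 * t * l) + 1) ^ t < 2 ^ (64 * t * l) := by
  have htl : t ≤ 2 ^ l := (Nat.le_mul_of_pos_right t hν).trans hl2
  have hll : l ≤ 2 ^ l := Nat.lt_two_pow_self.le
  have hT0 : 1 ≤ T := by rw [hT]; exact Nat.mul_pos (Nat.succ_pos _) hν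
  have hT1 : T ≤ 2 ^ (25 * l) := by
    calc T ≤ (9 * (21300 * t * r)) * ν := by
          rw [hT]
          have : 1 ≤ t * r := by nlinarith
          exact Nat.mul_le_mul_right _ (by nlinarith)
      _ ≤ (9 * (21300 * t * (26 * t))) * ν := by gcongr
      _ = 4984200 * (t * (t * ν)) := by ring
      _ ≤ 2 ^ (23 * l) * (2 ^ l * 2 ^ l) := by
          refine Nat.mul_le_mul ?_ (Nat.mul_le_mul htl hl2)
          exact le_trans (by norm_num) (Nat.pow_le_pow_right (by norm_num)
            (show 23 ≤ 23 * l by omega))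
      _ = _ := by rw [← pow_add, ← pow_add]; congr 1; ring
  have hbase : 4 * T * (64 * t * l) + 1 ≤ 2 ^ (36 * l) := by
    calc _ ≤ 2 ^ 9 * (T * (t * l)) := by
          have : 1 ≤ T * (t * l) := Nat.mul_pos hT0 (Nat.mul_pos (by omega) hl)
          nlinarith
      _ ≤ 2 ^ (9 * l) * (2 ^ (25 * l) * (2 ^ l * 2 ^ l)) := by
          refine Nat.mul_le_mul (Nat.pow_le_pow_right (by norm_num) (by omega))
            (Nat.mul_le_mul hT1 (Nat.mul_le_mul htl hll))
      _ = _ := by rw [← pow_add, ← pow_add, ← pow_add]; congr 1; ring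
  calc 2 * T * (4 * T * (64 * t * l) + 1) ^ t ≤ 2 ^ l * 2 ^ (25 * l) * (2 ^ (36 * l)) ^ t := by
        gcongr
        exact Nat.le_self_pow (by omega) 2
    _ = 2 ^ (26 * l + 36 * l * t) := by
        rw [← pow_mul, ← pow_add, ← pow_add]; congr 1; ring
    _ < _ := Nat.pow_lt_pow_right (by norm_num) (by nlinarith [Nat.mul_le_mul_right l ht])

theorem exists_sqrt_log_bound {t : ℕ} (ht : 2 ≤ t) :
    ∃ r : ℕ, 18 ≤ r ∧ t ≤ 2 ^ (r ^ 2) ∧ r ≤ 26 * t ∧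
      (r : ℝ) ≤ 26 * Real.sqrt (Real.log t) := by
  have ht' : (2 : ℝ) ≤ t := by exact_mod_cast ht
  have hlog2 := Real.log_two_gt_d9
  have hlog : Real.log 2 ≤ Real.log t := Real.log_le_log (by norm_num) ht'
  set s := Real.sqrt (Real.log t) with hs
  have hs2 : s ^ 2 = Real.log t := Real.sq_sqrt (by linarith)
  have hs0 : 0 ≤ s := Real.sqrt_nonneg _
  have hs8 : 0.8 ≤ s := by
    rw [hs]
    exact Real.le_sqrt_of_sq_le (by norm_num; linarith)
  have hst : s ≤ t := by
    have := Real.log_le_self (show (0 : ℝ) ≤ t by linarith)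
    nlinarith
  have hceil := Nat.ceil_lt_add_one (show 0 ≤ 2 * s by linarith)
  have hceil' := Nat.le_ceil (2 * s)
  have hr : ((18 + ⌈2 * s⌉₊ : ℕ) : ℝ) ≤ 26 * s := by push_cast; linarith
  refine ⟨18 + ⌈2 * s⌉₊, by omega, ?_, ?_, hr⟩
  · have h : (t : ℝ) ≤ 2 ^ ((18 + ⌈2 * s⌉₊) ^ 2) := by
      rw [← Real.log_le_log_iff (by linarith) (by positivity), Real.log_pow]
      push_cast
      nlinarith [sq_nonneg s]
    exact_mod_cast h
  · have : ((18 + ⌈2 * s⌉₊ : ℕ) : ℝ) ≤ ((26 * t : ℕ) : ℝ) := by push_cast at hr ⊢; linarith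
    exact_mod_cast this

theorem clog_two_le_log {n : ℕ} (hn : 2 ≤ n) : (Nat.clog 2 n : ℝ) ≤ 3 * Real.log n := by
  have hn' : (2 : ℝ) ≤ n := by exact_mod_cast hn
  have hlog2 := Real.log_two_gt_d9
  have hlog : Real.log 2 ≤ Real.log n := Real.log_le_log (by norm_num) hn'
  have h1 : 0 < Nat.clog 2 n := Nat.clog_pos (by norm_num) hn
  have h2 : (2 : ℝ) ^ (Nat.clog 2 n - 1) < n := by
    exact_mod_cast Nat.pow_pred_clog_lt_self (by norm_num) (by omega)
  have h3 := Real.log_le_log (by positivity) h2.le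
  rw [Real.log_pow, Nat.cast_sub (by omega)] at h3
  push_cast at h3
  have h4 : (1 : ℝ) ≤ Nat.clog 2 n := by exact_mod_cast h1
  nlinarith

/-- There is an absolute constant `c > 0` such that for every integer `t ≥ 1`, every
graph `G` with no `K_t` minor, and every ball hypergraph `𝓗` of `G`,
`τ(𝓗) ≤ c·t²·√(log t)·ν(𝓗)·log(t·ν(𝓗))`. -/
theorem tau_le_nearlinear_Kt :
    ∃ c : ℝ, 0 < c ∧
      ∀ t : ℕ, 1 ≤ t →
        ∀ (V : Type) [Fintype V] (G : SimpleGraph V) (E : Set (Set V)),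
          ¬ GraphMinor (⊤ : SimpleGraph (Fin t)) G →
          IsBallHypergraph G E →
          (transversalNumber E : ℝ) ≤
            c * (t : ℝ) ^ 2 * Real.sqrt (Real.log t) * (matchingNumber E : ℝ) *
              Real.log ((t : ℝ) * (matchingNumber E : ℝ)) := by
  refine ⟨9 * 21300 * 26 * 3 * 128, by norm_num, fun t ht V _ G E hG hE => ?_⟩
  obtain rfl | hE0 := E.eq_empty_or_nonempty
  · have h0 : transversalNumber (∅ : Set (Set V)) = 0 :=
      Nat.le_zero.1 (transversalNumber_le_card ∅ (by simp))
    have h1 : 0 ≤ Real.log ((t : ℝ) * (matchingNumber (∅ : Set (Set V)) : ℝ)) := by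
      exact_mod_cast Real.log_natCast_nonneg (t * matchingNumber (∅ : Set (Set V)))
    rw [h0, Nat.cast_zero]
    positivity
  have hν : 1 ≤ matchingNumber E := by
    obtain ⟨e, he⟩ := hE0
    simpa using card_le_matchingNumber (E := E) {e} (by simpa using he) (by simp)
  have ht2 : 2 ≤ t := by
    by_contra hlt
    obtain rfl : t = 1 := by omega
    obtain ⟨e, he⟩ := hE0
    obtain ⟨v, -⟩ := hE e he
    refine hG ⟨fun _ => {v}, fun _ => ?_, fun i j hij => absurd (Subsingleton.elim i j) hij,
      fun i j hij => absurd (Subsingleton.elim i j) hij.ne⟩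
    refine SimpleGraph.induce_connected_of_reflTransGen (u := v) rfl fun w hw => ?_
    rw [Set.mem_singleton_iff.1 hw]
  obtain ⟨r, hr, htr, hrt, hrs⟩ := exists_sqrt_log_bound ht2
  set ν := matchingNumber E with hνdef
  have htν : 2 ≤ t * ν := by nlinarith
  set l := Nat.clog 2 (t * ν) with hl
  have hl1 : 1 ≤ l := Nat.clog_pos (by norm_num) htν
  have hlle : (l : ℝ) ≤ 3 * Real.log (t * ν) := by
    simpa using clog_two_le_log htν
  obtain ⟨T, hT⟩ : ∃ T, T = (8 * (21300 * t * r) + 1) * ν := ⟨_, rfl⟩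
  have htr0 : 1 ≤ t * r := by nlinarith
  have hmain := transversalNumber_le_of_sparse G hG hE hE0
    (adjPairs_le_of_not_graphMinor hr (by omega) htr)
    (show 0 < T by rw [hT]; exact Nat.mul_pos (by omega) hν) hT
    (sample_size_bound ht2 hν (by omega) hrt hl1 (Nat.le_pow_clog (by norm_num) _) hT)
  have hnat : transversalNumber E ≤ 9 * 21300 * 128 * (t ^ 2 * r * ν * l) := by
    calc _ ≤ 2 * T * (64 * t * l) := hmain
      _ ≤ 2 * (9 * (21300 * t * r) * ν) * (64 * t * l) := by
          have : T ≤ 9 * (21300 * t * r) * ν := by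
            rw [hT]
            exact Nat.mul_le_mul_right _ (by nlinarith)
          gcongr
      _ = _ := by ring
  calc (transversalNumber E : ℝ) ≤ 9 * 21300 * 128 * (t ^ 2 * r * ν * l) := by exact_mod_cast hnat
    _ ≤ 9 * 21300 * 128 * (t ^ 2 * (26 * Real.sqrt (Real.log t)) * ν *
          (3 * Real.log (t * ν))) := by gcongr
    _ = _ := by ring
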